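/- Under assumptions (I1)–(I4), the map λ ↦ c_λ is continuous on (λ_n, λ_{n+1}). Moreover, for every λ ∈ (λ_n, λ_{n+1}), limsup_{ε→0⁺} (c_{λ−ε} − c_λ)/ε ≤ inf{ ‖u‖_H²/2 : u ∈ Q_λ } and sup{ ‖u‖_H²/2 : u ∈ Q_λ } ≤ liminf_{ε→0⁺} (c_λ − c_{λ+ε})/ε. -/

import Mathlib

open Filter Topology Set
open scoped InnerProductSpace

/- Abstract setting: `E = D(A^{1/2})` is a real Hilbert space in which the rescaled
eigenfunctions `ζ_k / √(1+λ_k)` form a Hilbert basis (encoded by `hON` and `hdense` below);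
the `H`-inner product of `u, v ∈ E` is recovered as `∑ₖ ⟨u,ζ_k⟩_H ⟨v,ζ_k⟩_H`, where
`⟨u,ζ_k⟩_H = ⟨u,ζ_k⟩_E / (1+λ_k)`. -/

variable {E : Type*} [NormedAddCommGroup E] [InnerProductSpace ℝ E] [CompleteSpace E]

/-- The `H`-inner-product coefficient `⟨u, ζ_k⟩_H = ⟨u, ζ_k⟩_E / (1 + λ_k)`. -/
noncomputable def coefH (lam : ℕ → ℝ) (ζ : ℕ → E) (u : E) (k : ℕ) : ℝ :=
  ⟪u, ζ k⟫_ℝ / (1 + lam k)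

/-- The square of the `H`-norm: `‖u‖_H² = ∑ₖ ⟨u,ζ_k⟩_H²`. -/
noncomputable def normHsq (lam : ℕ → ℝ) (ζ : ℕ → E) (u : E) : ℝ :=
  ∑' k, (coefH lam ζ u k) ^ 2

/-- The symmetric bilinear form `q_λ(u,v) = ∑ₖ (λ_k − λ) ⟨u,ζ_k⟩_H ⟨v,ζ_k⟩_H`. -/
noncomputable def qForm (lam : ℕ → ℝ) (ζ : ℕ → E) (lambda : ℝ) (u v : E) : ℝ :=
  ∑' k, (lam k - lambda) * (coefH lam ζ u k * coefH lam ζ v k)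

/-- The action functional `J_λ(u) = ½ q_λ(u) − I(u)`. -/
noncomputable def Jfun (lam : ℕ → ℝ) (ζ : ℕ → E) (I : E → ℝ) (lambda : ℝ) (u : E) : ℝ :=
  qForm lam ζ lambda u u / 2 - I u

/-- `E_n`, the span of the eigenfunctions `ζ_0, …, ζ_n` (the first `n+1` of them). -/
noncomputable def Esub (ζ : ℕ → E) (n : ℕ) : Submodule ℝ E :=
  Submodule.span ℝ (ζ '' {k : ℕ | k ≤ n})

/-- `F_n(u) = E_n ⊕ ℝ u`. -/
noncomputable def Fsub (ζ : ℕ → E) (n : ℕ) (u : E) : Submodule ℝ E :=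
  Esub ζ n ⊔ Submodule.span ℝ {u}

/-- `F_n(u)⁺ = E_n ⊕ ℝ⁺ u = {v + t u : v ∈ E_n, t > 0}`. -/
def FsubPlus (ζ : ℕ → E) (n : ℕ) (u : E) : Set E :=
  {w | ∃ v ∈ Esub ζ n, ∃ t : ℝ, 0 < t ∧ w = v + t • u}

/-- The derivative of `J_λ` at `u` applied to `w`: `J_λ'(u)[w] = q_λ(u,w) − I'(u)[w]`. -/
noncomputable def Jderiv (lam : ℕ → ℝ) (ζ : ℕ → E) (I' : E → E →L[ℝ] ℝ)
    (lambda : ℝ) (u w : E) : ℝ :=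
  qForm lam ζ lambda u w - I' u w

/-- The Nehari–Pankov set `NP_λ = {u ∈ E ∖ E_n : J_λ'(u)|_{F_n(u)} = 0}`. -/
def NehariPankov (lam : ℕ → ℝ) (ζ : ℕ → E) (I' : E → E →L[ℝ] ℝ)
    (n : ℕ) (lambda : ℝ) : Set E :=
  {u | u ∉ Esub ζ n ∧ ∀ w ∈ Fsub ζ n u, Jderiv lam ζ I' lambda u w = 0}

/-- The ground-state level `c_λ = inf_{NP_λ} J_λ`. -/
noncomputable def clevel (lam : ℕ → ℝ) (ζ : ℕ → E) (I : E → ℝ) (I' : E → E →L[ℝ] ℝ)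
    (n : ℕ) (lambda : ℝ) : ℝ :=
  sInf (Jfun lam ζ I lambda '' NehariPankov lam ζ I' n lambda)

/-- The set `Q_λ` of minimizers of `J_λ` on `NP_λ`. -/
def Qset (lam : ℕ → ℝ) (ζ : ℕ → E) (I : E → ℝ) (I' : E → E →L[ℝ] ℝ)
    (n : ℕ) (lambda : ℝ) : Set E :=
  {u | u ∈ NehariPankov lam ζ I' n lambda ∧
    Jfun lam ζ I lambda u = clevel lam ζ I I' n lambda}

/-- `E_n^⊥ = {w ∈ E : ⟨w, ζ_k⟩_H = 0 for k = 0, …, n}`. -/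
def EsubPerp (lam : ℕ → ℝ) (ζ : ℕ → E) (n : ℕ) : Set E :=
  {w | ∀ k ≤ n, coefH lam ζ w k = 0}

/-!
For `λ` in the gap the form `q_λ` is negative definite on `E_n` and coercive on `E_n^⊥`, and (I4)
makes every point `u` of `NP_λ` the maximizer of `J_λ` on the half-space `E_n ⊕ [0, ∞) u`, the only
one. Conversely every such half-space with `u ∉ E_n` contains a maximizer, and it lies in `NP_λ`, so
`c_λ` is the min-max `inf_u max_{E_n ⊕ [0, ∞) u} J_λ`; compactness of the maximizers as the form and
the half-space vary yields ground states.

Testing the half-space of a ground state `u` of `q` with its maximizer `x` for a nearby form `q'`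
gives `c(q') ≤ c(q) + (q' - q)(x) / 2`, and `x → u` as `q' → q` because the maximizer is unique.
With `q_μ - q_λ = (λ - μ) ‖·‖_H²` this is the one-sided expansion
`c_μ ≤ c_λ - (μ - λ) ‖u‖_H² / 2 + o(|μ - λ|)`, from which both slope bounds are read off.
-/

section RealAnalysis

theorem isBoundedUnder_le_of_seq_frequently_le {α : Type*} {f : Filter α}
    [f.IsCountablyGenerated] {g : α → ℝ}
    (h : ∀ m : ℕ → α, Tendsto m atTop f → ∃ K, ∃ᶠ j in atTop, g (m j) ≤ K) :
    f.IsBoundedUnder (· ≤ ·) g := by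
  by_contra hunb
  have hne : (f ⊓ comap g atTop).NeBot := by
    refine inf_neBot_iff_frequently_right.2 fun {p} hp => ?_
    obtain ⟨t, ht, htp⟩ := mem_comap.1 hp
    obtain ⟨K, hK⟩ := mem_atTop_sets.1 ht
    exact fun hev => hunb ⟨K, eventually_map.2 <| hev.mono fun x hx =>
      le_of_not_ge fun hKx => hx (htp (hK _ hKx))⟩
  obtain ⟨m, hm⟩ := exists_seq_tendsto (f ⊓ comap g atTop)
  obtain ⟨hmf, hmg⟩ := tendsto_inf.1 hm
  obtain ⟨K, hK⟩ := h m hmf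
  have hgt : ∀ᶠ j in atTop, K < g (m j) := (tendsto_comap_iff.1 hmg).eventually_gt_atTop K
  obtain ⟨j, hjle, hjgt⟩ := (hK.and_eventually hgt).exists
  exact hjle.not_gt hjgt

variable {c : ℝ → ℝ} {l a K : ℝ}

theorem limsup_backward_slope_le
    (hsuper : ∀ η > 0, ∀ᶠ m in 𝓝 l, c m ≤ c l - (m - l) * a + η * |m - l|)
    (hcalm : ∀ᶠ m in 𝓝 l, c l - c m ≤ K * |m - l|) :
    limsup (fun ε => (c (l - ε) - c l) / ε) (𝓝[>] 0) ≤ a := by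
  have hlim : Tendsto (fun ε => l - ε) (𝓝[>] 0) (𝓝 l) :=
    ((continuous_sub_left l).tendsto' 0 l (sub_zero l)).mono_left nhdsWithin_le_nhds
  have hcobdd : (𝓝[>] (0 : ℝ)).IsCoboundedUnder (· ≤ ·) fun ε => (c (l - ε) - c l) / ε := by
    refine IsBoundedUnder.isCoboundedUnder_le ⟨-K, eventually_map.2 ?_⟩
    filter_upwards [hlim.eventually hcalm, self_mem_nhdsWithin] with ε hε (hpos : 0 < ε)
    rw [sub_sub_cancel_left, abs_neg, abs_of_pos hpos] at hε
    exact (le_div_iff₀ hpos).2 (by linarith)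
  refine le_of_forall_pos_le_add fun η hη => limsup_le_of_le hcobdd ?_
  filter_upwards [hlim.eventually (hsuper η hη), self_mem_nhdsWithin] with ε hε (hpos : 0 < ε)
  rw [sub_sub_cancel_left, abs_neg, abs_of_pos hpos] at hε
  exact (div_le_iff₀ hpos).2 (by linarith)

theorem le_liminf_forward_slope
    (hsuper : ∀ η > 0, ∀ᶠ m in 𝓝 l, c m ≤ c l - (m - l) * a + η * |m - l|)
    (hcalm : ∀ᶠ m in 𝓝 l, c l - c m ≤ K * |m - l|) :
    a ≤ liminf (fun ε => (c l - c (l + ε)) / ε) (𝓝[>] 0) := by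
  have hlim : Tendsto (fun ε => l + ε) (𝓝[>] 0) (𝓝 l) :=
    ((continuous_const_add l).tendsto' 0 l (add_zero l)).mono_left nhdsWithin_le_nhds
  have hcobdd : (𝓝[>] (0 : ℝ)).IsCoboundedUnder (· ≥ ·) fun ε => (c l - c (l + ε)) / ε := by
    refine IsBoundedUnder.isCoboundedUnder_ge ⟨K, eventually_map.2 ?_⟩
    filter_upwards [hlim.eventually hcalm, self_mem_nhdsWithin] with ε hε (hpos : 0 < ε)
    rw [add_sub_cancel_left, abs_of_pos hpos] at hε
    exact (div_le_iff₀ hpos).2 hε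
  refine le_of_forall_sub_le fun η hη => le_liminf_of_le hcobdd ?_
  filter_upwards [hlim.eventually (hsuper η hη), self_mem_nhdsWithin] with ε hε (hpos : 0 < ε)
  rw [add_sub_cancel_left, abs_of_pos hpos] at hε
  exact (le_div_iff₀ hpos).2 (by linarith)

end RealAnalysis

section WeakConvergence

/-- Convergence of `x` to `y` along `f` in the weak topology of `V`, tested directly on continuous
functionals. -/
def WeakTendsto {ι V : Type*} [NormedAddCommGroup V] [NormedSpace ℝ V]
    (x : ι → V) (f : Filter ι) (y : V) : Prop :=
  ∀ φ : V →L[ℝ] ℝ, Tendsto (fun i => φ (x i)) f (𝓝 (φ y))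

namespace WeakTendsto

variable {ι κ V F : Type*} [NormedAddCommGroup V] [NormedSpace ℝ V]
  [NormedAddCommGroup F] [NormedSpace ℝ F] {x : ι → V} {y : V} {f : Filter ι} {g : Filter κ}

theorem const (y : V) (f : Filter ι) : WeakTendsto (fun _ => y) f y :=
  fun _ => tendsto_const_nhds

theorem comp (h : WeakTendsto x f y) {m : κ → ι} (hm : Tendsto m g f) :
    WeakTendsto (x ∘ m) g y :=
  fun φ => (h φ).comp hm

theorem const_smul (h : WeakTendsto x f y) (s : ℝ) : WeakTendsto (fun i => s • x i) f (s • y) :=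
  fun φ => by simpa only [map_smul] using (h φ).const_smul s

theorem const_add (h : WeakTendsto x f y) (v : V) : WeakTendsto (fun i => v + x i) f (v + y) :=
  fun φ => by simpa only [map_add] using (h φ).const_add (φ v)

theorem clm_apply (h : WeakTendsto x f y) [FiniteDimensional ℝ F] (T : V →L[ℝ] F) :
    Tendsto (fun i => T (x i)) f (𝓝 (T y)) := by
  let e := (Module.finBasis ℝ F).equivFunL
  have he : Tendsto (fun i => e (T (x i))) f (𝓝 (e (T y))) := tendsto_pi_nhds.2 fun k =>
    h ((ContinuousLinearMap.proj (R := ℝ) (φ := fun _ => ℝ) k).comp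
      (e.toContinuousLinearMap.comp T))
  simpa [Function.comp_def] using (e.symm.continuous.tendsto _).comp he

end WeakTendsto

variable {V : Type*} [NormedAddCommGroup V] [InnerProductSpace ℝ V]

theorem WeakTendsto.starProjection {ι : Type*} {f : Filter ι} {x : ι → V} {y : V}
    (h : WeakTendsto x f y) (W : Submodule ℝ V) [FiniteDimensional ℝ W] :
    Tendsto (fun i => W.starProjection (x i)) f (𝓝 (W.starProjection y)) := by
  simpa only [Submodule.starProjection_apply, Function.comp_def] using
    (continuous_subtype_val.tendsto _).comp (h.clm_apply W.orthogonalProjectionOnto)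

theorem exists_subseq_weakTendsto_of_norm_le [CompleteSpace V] {x : ℕ → V} {R : ℝ}
    (hx : ∀ j, ‖x j‖ ≤ R) :
    ∃ y : V, ∃ φ : ℕ → ℕ, StrictMono φ ∧ WeakTendsto (x ∘ φ) atTop y := by
  -- Sequential Banach–Alaoglu needs a separable space: work in the closed span of the sequence.
  let K := (Submodule.span ℝ (range x)).topologicalClosure
  have : TopologicalSpace.SeparableSpace K :=
    ((countable_range x).isSeparable.span (R := ℝ)).closure.separableSpace
  have : CompleteSpace K := (Submodule.isClosed_topologicalClosure _).completeSpace_coe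
  have hxK : ∀ j, x j ∈ K := fun j =>
    Submodule.le_topologicalClosure _ (Submodule.subset_span (mem_range_self j))
  obtain ⟨ψ, -, φ, hφ, hψ⟩ := WeakDual.isSeqCompact_closedBall ℝ K 0 R
    (x := fun j => StrongDual.toWeakDual (InnerProductSpace.toDual ℝ K ⟨x j, hxK j⟩))
    (fun j => by simpa using hx j)
  let y : K := (InnerProductSpace.toDual ℝ K).symm (WeakDual.toStrongDual ψ)
  refine ⟨y, φ, hφ, fun θ => ?_⟩
  let q : K := (InnerProductSpace.toDual ℝ K).symm (θ ∘L K.subtypeL)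
  have hθ : ∀ z : K, θ z = ⟪z, q⟫_ℝ := fun z => by
    rw [real_inner_comm, InnerProductSpace.toDual_symm_apply]; rfl
  have hlim := ((WeakDual.eval_continuous q).tendsto ψ).comp hψ
  have hy : ψ q = θ y := by rw [hθ, InnerProductSpace.toDual_symm_apply]; rfl
  rw [hy] at hlim
  exact hlim.congr fun j => (hθ ⟨x (φ j), hxK _⟩).symm

end WeakConvergence

section HalfSpace

/-- The closed half-space `W ⊕ ℝ≥0 u`, on which the fibrewise maximization takes place. Its subset
`W ⊕ ℝ>0 u` is the `F(u)⁺` of the Nehari–Pankov method. -/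
def halfSpace {V : Type*} [AddCommGroup V] [Module ℝ V] (W : Submodule ℝ V) (u : V) : Set V :=
  {x | ∃ v ∈ W, ∃ t : ℝ, 0 ≤ t ∧ v + t • u = x}

section Module

variable {V : Type*} [AddCommGroup V] [Module ℝ V] {W : Submodule ℝ V} {u v x z : V} {s t : ℝ}

theorem add_smul_mem_halfSpace (hv : v ∈ W) (ht : 0 ≤ t) : v + t • u ∈ halfSpace W u :=
  ⟨v, hv, t, ht, rfl⟩

theorem mem_halfSpace_of_mem (hv : v ∈ W) : v ∈ halfSpace W u :=
  ⟨v, hv, 0, le_rfl, by simp⟩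

theorem smul_mem_halfSpace (hx : x ∈ halfSpace W u) (hs : 0 ≤ s) : s • x ∈ halfSpace W u := by
  obtain ⟨v, hv, t, ht, rfl⟩ := hx
  exact ⟨s • v, W.smul_mem s hv, s * t, mul_nonneg hs ht, by rw [smul_add, mul_smul]⟩

theorem halfSpace_subset_of_mem (hz : z ∈ halfSpace W u) : halfSpace W z ⊆ halfSpace W u := by
  obtain ⟨v, hv, t, ht, rfl⟩ := hz
  rintro _ ⟨v', hv', s, hs, rfl⟩
  exact ⟨v' + s • v, W.add_mem hv' (W.smul_mem s hv), s * t, mul_nonneg hs ht, by module⟩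

theorem mem_halfSpace_symm (hx : x ∈ halfSpace W u) (hxW : x ∉ W) : u ∈ halfSpace W x := by
  obtain ⟨v, hv, t, ht, rfl⟩ := hx
  have ht' : t ≠ 0 := fun h => hxW (by simpa [h] using hv)
  exact ⟨-(t⁻¹ • v), W.neg_mem (W.smul_mem _ hv), t⁻¹, inv_nonneg.2 ht,
    by rw [smul_add, inv_smul_smul₀ ht', neg_add_cancel_left]⟩

end Module

variable {V : Type*} [NormedAddCommGroup V] [InnerProductSpace ℝ V] {W : Submodule ℝ V}
  {u v x z : V}

theorem inner_orthogonal_add_smul {q : V} (hq : q ∈ Wᗮ) (hv : v ∈ W) (t : ℝ) (u : V) :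
    ⟪q, v + t • u⟫_ℝ = t * ⟪q, u⟫_ℝ := by
  rw [inner_add_right, W.inner_left_of_mem_orthogonal hv hq, zero_add, real_inner_smul_right]

section Projection

variable [W.HasOrthogonalProjection]

theorem starProjection_orthogonal_ne_zero (hu : u ∉ W) : Wᗮ.starProjection u ≠ 0 := by
  rwa [Ne, Submodule.starProjection_apply_eq_zero_iff, Submodule.orthogonal_orthogonal]

theorem inner_starProjection_orthogonal_pos (hu : u ∉ W) : 0 < ⟪Wᗮ.starProjection u, u⟫_ℝ := by
  have hself := Wᗮ.inner_starProjection_left_eq_right (Wᗮ.starProjection u) u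
  rw [Submodule.starProjection_eq_self_iff.2 (Wᗮ.starProjection_apply_mem u)] at hself
  rw [hself]
  exact real_inner_self_pos.2 (starProjection_orthogonal_ne_zero hu)

theorem starProjection_orthogonal_add_smul (hv : v ∈ W) (t : ℝ) (u : V) :
    Wᗮ.starProjection (v + t • u) = t • Wᗮ.starProjection u := by
  rw [map_add, map_smul, (Submodule.starProjection_apply_eq_zero_iff _).2
    (W.le_orthogonal_orthogonal hv), zero_add]

theorem exists_unit_orthogonal_mem_halfSpace (hu : u ∉ W) :
    ∃ w ∈ Wᗮ, ‖w‖ = 1 ∧ w ∈ halfSpace W u := by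
  have hQ : Wᗮ.starProjection u ∈ halfSpace W u := ⟨-W.starProjection u,
    W.neg_mem (W.starProjection_apply_mem u), 1, zero_le_one, by simp [neg_add_eq_sub]⟩
  exact ⟨‖Wᗮ.starProjection u‖⁻¹ • Wᗮ.starProjection u,
    Wᗮ.smul_mem _ (Wᗮ.starProjection_apply_mem u),
    norm_smul_inv_norm (𝕜 := ℝ) (starProjection_orthogonal_ne_zero hu),
    smul_mem_halfSpace hQ (inv_nonneg.2 (norm_nonneg _))⟩

theorem halfSpace_eq_sup_inter (hu : u ∉ W) :
    halfSpace W u = ((W ⊔ Submodule.span ℝ {u} : Submodule ℝ V) : Set V) ∩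
      {x | 0 ≤ ⟪Wᗮ.starProjection u, x⟫_ℝ} := by
  have hq := inner_starProjection_orthogonal_pos hu
  have hinner := fun {v} (hv : v ∈ W) (t : ℝ) =>
    inner_orthogonal_add_smul (Wᗮ.starProjection_apply_mem u) hv t u
  ext x
  constructor
  · rintro ⟨v, hv, t, ht, rfl⟩
    have htu : t • u ∈ Submodule.span ℝ {u} :=
      Submodule.smul_mem _ t (Submodule.mem_span_singleton_self u)
    exact ⟨Submodule.add_mem_sup hv htu, (mul_nonneg ht hq.le).trans_eq (hinner hv t).symm⟩
  · rintro ⟨hx, (hpos : 0 ≤ ⟪Wᗮ.starProjection u, x⟫_ℝ)⟩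
    obtain ⟨v, hv, _, hu', rfl⟩ := Submodule.mem_sup.1 hx
    obtain ⟨t, rfl⟩ := Submodule.mem_span_singleton.1 hu'
    rw [hinner hv] at hpos
    exact add_smul_mem_halfSpace hv (nonneg_of_mul_nonneg_left hpos hq)

end Projection

variable [FiniteDimensional ℝ W]

theorem isCompact_halfSpace_inter_closedBall (hu : u ∉ W) (R : ℝ) :
    IsCompact (halfSpace W u ∩ Metric.closedBall 0 R) := by
  let K : Submodule ℝ V := W ⊔ Submodule.span ℝ {u}
  have hball : IsCompact ((K : Set V) ∩ Metric.closedBall 0 R) := by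
    convert (isCompact_closedBall (0 : K) R).image continuous_subtype_val
    ext x
    simp [K, and_comm]
  have hclosed : IsClosed {x | 0 ≤ ⟪Wᗮ.starProjection u, x⟫_ℝ} :=
    isClosed_le continuous_const (by fun_prop)
  rw [halfSpace_eq_sup_inter hu, inter_right_comm]
  exact hball.inter_right hclosed

theorem tendsto_zero_of_weakTendsto_zero_of_mem_halfSpace {y z : ℕ → V} {z₀ : V} {R : ℝ}
    (hz : WeakTendsto z atTop z₀) (hz₀ : z₀ ∉ W) (hzR : ∀ j, ‖z j‖ ≤ R)
    (hyz : ∀ j, y j ∈ halfSpace W (z j)) (hy : WeakTendsto y atTop 0) :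
    Tendsto y atTop (𝓝 0) := by
  choose v hv t _ hvt using hyz
  let q := Wᗮ.starProjection z₀
  have hqz : Tendsto (fun j => ⟪q, z j⟫_ℝ) atTop (𝓝 ⟪q, z₀⟫_ℝ) := hz (innerSL ℝ q)
  have hqy : Tendsto (fun j => ⟪q, y j⟫_ℝ) atTop (𝓝 0) := by simpa using hy (innerSL ℝ q)
  have hq : ⟪q, z₀⟫_ℝ ≠ 0 := (inner_starProjection_orthogonal_pos hz₀).ne'
  have ht : Tendsto t atTop (𝓝 0) := by
    have hquot := hqy.div hqz hq
    rw [zero_div] at hquot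
    refine hquot.congr' ?_
    filter_upwards [hqz.eventually_ne hq] with j hj
    simp only [Pi.div_apply]
    rw [← hvt j, inner_orthogonal_add_smul (Wᗮ.starProjection_apply_mem z₀) (hv j),
      mul_div_cancel_right₀ _ hj]
  have hPy : Tendsto (fun j => W.starProjection (y j)) atTop (𝓝 0) := by
    simpa using hy.starProjection W
  have hQy : Tendsto (fun j => Wᗮ.starProjection (y j)) atTop (𝓝 0) := by
    have hbdd : IsBoundedUnder (· ≤ ·) atTop (norm ∘ fun j => Wᗮ.starProjection (z j)) :=
      isBoundedUnder_of ⟨R, fun j => (Wᗮ.norm_starProjection_apply_le (z j)).trans (hzR j)⟩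
    refine (ht.zero_smul_isBoundedUnder_le hbdd).congr fun j => ?_
    rw [← starProjection_orthogonal_add_smul (hv j), hvt]
  simpa only [Submodule.starProjection_add_starProjection_orthogonal, add_zero] using hPy.add hQy

end HalfSpace

section Nonlinearity

variable {V : Type*} [NormedAddCommGroup V] [InnerProductSpace ℝ V]

/-- A functional `I` with derivative `I'` that is weakly sequentially continuous, superquadratic
along rays, and satisfies the convexity-type inequality of generalized Nehari methods: assumptions
(I1)–(I4) of the paper, with `I 0 = 0` in place of positivity. -/
structure AdmissibleNonlinearity (I : V → ℝ) (I' : V → V →L[ℝ] ℝ) : Prop where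
  hasFDerivAt : ∀ u, HasFDerivAt I (I' u) u
  tendsto_of_weakTendsto : ∀ (x : ℕ → V) (y : V), WeakTendsto x atTop y →
    Tendsto (fun j => I (x j)) atTop (𝓝 (I y))
  map_zero : I 0 = 0
  monotoneOn_div_sq : ∀ u ≠ 0, MonotoneOn (fun t : ℝ => I (t • u) / t ^ 2) (Ioi 0)
  tendsto_div_sq_zero : ∀ u ≠ 0, Tendsto (fun t : ℝ => I (t • u) / t ^ 2) (𝓝[>] 0) (𝓝 0)
  tendsto_div_sq_atTop : ∀ u ≠ 0, Tendsto (fun t : ℝ => I (t • u) / t ^ 2) atTop atTop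
  sub_add_deriv_nonpos : ∀ u ≠ 0, ∀ (v : V) (s : ℝ), -1 ≤ s →
    I u - I ((1 + s) • u + v) + I' u ((s * (s / 2 + 1)) • u + (1 + s) • v) ≤ 0
  sub_add_deriv_neg : ∀ u ≠ 0, ∀ s : ℝ, -1 ≤ s → s ≠ 0 →
    I u - I ((1 + s) • u) + I' u ((s * (s / 2 + 1)) • u) < 0

namespace AdmissibleNonlinearity

variable {I : V → ℝ} {I' : V → V →L[ℝ] ℝ} (hI : AdmissibleNonlinearity I I')
include hI

theorem continuous : Continuous I :=
  continuous_iff_continuousAt.2 fun u => (hI.hasFDerivAt u).continuousAt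

theorem div_sq_le_div_sq (u : V) {s t : ℝ} (hs : 0 < s) (hst : s ≤ t) :
    I (s • u) / s ^ 2 ≤ I (t • u) / t ^ 2 := by
  rcases eq_or_ne u 0 with rfl | hu
  · simp [hI.map_zero]
  · exact hI.monotoneOn_div_sq u hu hs (hs.trans_le hst) hst

theorem nonneg (u : V) : 0 ≤ I u := by
  rcases eq_or_ne u 0 with rfl | hu
  · exact hI.map_zero.ge
  · refine le_of_tendsto (hI.tendsto_div_sq_zero u hu) ?_
    filter_upwards [Ioo_mem_nhdsGT one_pos] with t ht
    simpa using hI.div_sq_le_div_sq u ht.1 ht.2.le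

theorem tendsto_div_sq_atTop_of_weakTendsto {w : ℕ → V} {y : V} {t : ℕ → ℝ}
    (hw : WeakTendsto w atTop y) (hy : y ≠ 0) (ht : Tendsto t atTop atTop) :
    Tendsto (fun j => I (t j • w j) / t j ^ 2) atTop atTop := by
  refine tendsto_atTop.2 fun C => ?_
  obtain ⟨s, hCs, hs⟩ :=
    (((hI.tendsto_div_sq_atTop y hy).eventually_gt_atTop C).and (eventually_gt_atTop 0)).exists
  have hlim : Tendsto (fun j => I (s • w j) / s ^ 2) atTop (𝓝 (I (s • y) / s ^ 2)) :=
    (hI.tendsto_of_weakTendsto _ _ (hw.const_smul s)).div_const _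
  filter_upwards [hlim.eventually_const_lt hCs, ht.eventually_ge_atTop s] with j hCj hsj
  exact hCj.le.trans (hI.div_sq_le_div_sq (w j) hs hsj)

variable [CompleteSpace V] {W : Submodule ℝ V} [FiniteDimensional ℝ W]

theorem not_tendsto_norm_atTop_of_le_mul_sq {x z : ℕ → V} {z₀ : V} {R M : ℝ}
    (hz : WeakTendsto z atTop z₀) (hz₀ : z₀ ∉ W) (hzR : ∀ j, ‖z j‖ ≤ R)
    (hxz : ∀ j, x j ∈ halfSpace W (z j)) (hxM : ∀ j, I (x j) ≤ M * ‖x j‖ ^ 2) :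
    ¬ Tendsto (fun j => ‖x j‖) atTop atTop := by
  -- Normalize `x j`: a nonzero weak limit contradicts superquadratic growth, while convergence to
  -- zero within the half-spaces is strong and contradicts the normalization.
  intro hx
  let y := fun j => ‖x j‖⁻¹ • x j
  have hyz : ∀ j, y j ∈ halfSpace W (z j) := fun j =>
    smul_mem_halfSpace (hxz j) (inv_nonneg.2 (norm_nonneg _))
  have hy1 : ∀ j, ‖y j‖ ≤ 1 := fun j => by
    simpa [y, norm_smul] using inv_mul_le_one
  obtain ⟨y₀, φ, hφ, hy₀⟩ := exists_subseq_weakTendsto_of_norm_le hy1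
  have hxφ := hx.comp hφ.tendsto_atTop
  have hxpos : ∀ᶠ j in atTop, 0 < ‖x (φ j)‖ := hxφ.eventually_gt_atTop 0
  rcases eq_or_ne y₀ 0 with rfl | hne
  · have hzero : Tendsto (fun j => ‖y (φ j)‖) atTop (𝓝 0) := by
      simpa using (tendsto_zero_of_weakTendsto_zero_of_mem_halfSpace
        (hz.comp hφ.tendsto_atTop) hz₀ (fun j => hzR (φ j)) (fun j => hyz (φ j)) hy₀).norm
    have hone : ∀ᶠ j in atTop, ‖y (φ j)‖ = 1 := hxpos.mono fun j hj => by
      simp [y, norm_smul, hj.ne']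
    exact zero_ne_one (tendsto_nhds_unique hzero (tendsto_nhds_of_eventually_eq hone))
  · have hblow := hI.tendsto_div_sq_atTop_of_weakTendsto hy₀ hne hxφ
    obtain ⟨j, hj, hjpos⟩ := ((hblow.eventually_gt_atTop M).and hxpos).exists
    refine hj.not_ge ((div_le_iff₀ (pow_pos hjpos 2)).2 ?_)
    simpa [y, smul_inv_smul₀ hjpos.ne'] using hxM (φ j)

end AdmissibleNonlinearity

end Nonlinearity

section BilinearForm

theorem continuous_sub_smul {F : Type*} [NormedAddCommGroup F] [NormedSpace ℝ F] (A H : F) :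
    Continuous fun m : ℝ => A - m • H := by
  fun_prop

theorem norm_sub_smul_sub_sub_smul {F : Type*} [NormedAddCommGroup F] [NormedSpace ℝ F]
    (A H : F) (m l : ℝ) : ‖A - m • H - (A - l • H)‖ = |m - l| * ‖H‖ := by
  have hdiff : A - m • H - (A - l • H) = -((m - l) • H) := by module
  rw [hdiff, norm_neg, norm_smul, Real.norm_eq_abs]

variable {V : Type*} [NormedAddCommGroup V]

theorem abs_apply_self_le [NormedSpace ℝ V] (B : V →L[ℝ] V →L[ℝ] ℝ) (u : V) :
    |B u u| ≤ ‖B‖ * ‖u‖ ^ 2 := by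
  simpa only [Real.norm_eq_abs, sq, mul_assoc] using B.le_opNorm₂ u u

theorem tendsto_apply_self [NormedSpace ℝ V] {ι : Type*} {f : Filter ι}
    {b : ι → V →L[ℝ] V →L[ℝ] ℝ} {B : V →L[ℝ] V →L[ℝ] ℝ} {x : ι → V} {u : V}
    (hb : Tendsto b f (𝓝 B)) (hx : Tendsto x f (𝓝 u)) :
    Tendsto (fun i => b i (x i) (x i)) f (𝓝 (B u u)) := by
  have hbx : Tendsto (fun i => b i (x i)) f (𝓝 (B u)) :=
    (isBoundedBilinearMap_apply.continuous.tendsto (B, u)).comp (hb.prodMk_nhds hx)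
  exact (isBoundedBilinearMap_apply.continuous.tendsto (B u, u)).comp (hbx.prodMk_nhds hx)

theorem abs_apply_self_sub_apply_self_le [NormedSpace ℝ V] (B : V →L[ℝ] V →L[ℝ] ℝ) (x u : V) :
    |B x x - B u u| ≤ ‖B‖ * ((‖x‖ + ‖u‖) * ‖x - u‖) := by
  have hsplit : B x x - B u u = B x (x - u) + B (x - u) u := by
    simp only [map_sub, _root_.sub_apply]; ring
  rw [hsplit]
  refine (abs_add_le _ _).trans ((add_le_add (B.le_opNorm₂ _ _) (B.le_opNorm₂ _ _)).trans_eq ?_)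
  ring

/-- Instance search does not find this through the operator norm topology of the inner space. -/
instance firstCountableTopology_bilinearForm [NormedSpace ℝ V] :
    FirstCountableTopology (V →L[ℝ] V →L[ℝ] ℝ) :=
  let := (inferInstance : PseudoMetricSpace (V →L[ℝ] V →L[ℝ] ℝ))
  UniformSpace.firstCountableTopology _

variable [InnerProductSpace ℝ V] {W : Submodule ℝ V} {B : V →L[ℝ] V →L[ℝ] ℝ}

/-- Symmetric bounded forms that are negative definite on `W`, coercive on `Wᗮ`, and for which `W`
and `Wᗮ` are orthogonal: the forms `q_λ` for `λ` in a spectral gap, with `W` the span of the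
eigenvectors below the gap. -/
structure IsSplitForm (W : Submodule ℝ V) (B : V →L[ℝ] V →L[ℝ] ℝ) : Prop where
  symm : ∀ u v, B u v = B v u
  orthogonal : ∀ v ∈ W, ∀ w ∈ Wᗮ, B v w = 0
  neg : ∀ v ∈ W, v ≠ 0 → B v v < 0
  coercive : ∃ δ > 0, ∀ w ∈ Wᗮ, δ * ‖w‖ ^ 2 ≤ B w w

namespace IsSplitForm

theorem nonpos (hB : IsSplitForm W B) {v : V} (hv : v ∈ W) : B v v ≤ 0 := by
  rcases eq_or_ne v 0 with rfl | hne
  · simp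
  · exact (hB.neg v hv hne).le

theorem starProjection_apply_self_le (hB : IsSplitForm W B) [W.HasOrthogonalProjection] (u : V) :
    B (W.starProjection u) (W.starProjection u) ≤ B u u := by
  obtain ⟨δ, hδ, hcoer⟩ := hB.coercive
  have hpos : 0 ≤ B (Wᗮ.starProjection u) (Wᗮ.starProjection u) :=
    (by positivity : 0 ≤ δ * ‖Wᗮ.starProjection u‖ ^ 2).trans
      (hcoer _ (Wᗮ.starProjection_apply_mem u))
  have hzero := hB.orthogonal _ (W.starProjection_apply_mem u) _ (Wᗮ.starProjection_apply_mem u)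
  conv_rhs => rw [← W.starProjection_add_starProjection_orthogonal u]
  simp only [map_add, _root_.add_apply, hB.symm (Wᗮ.starProjection u) (W.starProjection u), hzero]
  linarith

theorem eventually_coercive (hB : IsSplitForm W B) :
    ∃ δ > 0, ∀ᶠ B' in 𝓝 B, ∀ w ∈ Wᗮ, δ * ‖w‖ ^ 2 ≤ B' w w := by
  obtain ⟨δ, hδ, hcoer⟩ := hB.coercive
  refine ⟨δ / 2, half_pos hδ, ?_⟩
  filter_upwards [Metric.ball_mem_nhds B (half_pos hδ)] with B' hB' w hw
  have hdiff := neg_le_of_abs_le (abs_apply_self_le (B' - B) w)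
  have hnorm : ‖B' - B‖ * ‖w‖ ^ 2 ≤ δ / 2 * ‖w‖ ^ 2 := by
    gcongr
    exact ((dist_eq_norm B' B).symm.trans_lt hB').le
  simp only [_root_.sub_apply] at hdiff
  linarith [hcoer w hw]

theorem tendsto_sub_smul_nhdsWithin {A H : V →L[ℝ] V →L[ℝ] ℝ} {l : ℝ}
    (hl : ∀ᶠ m in 𝓝 l, IsSplitForm W (A - m • H)) :
    Tendsto (fun m : ℝ => A - m • H) (𝓝 l) (𝓝[{B | IsSplitForm W B}] (A - l • H)) :=
  tendsto_nhdsWithin_iff.2 ⟨(continuous_sub_smul A H).tendsto l, hl⟩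

end IsSplitForm

end BilinearForm

section Action

variable {V : Type*} [NormedAddCommGroup V] [InnerProductSpace ℝ V] {W : Submodule ℝ V}
  {B B' : V →L[ℝ] V →L[ℝ] ℝ} {I : V → ℝ} {I' : V → V →L[ℝ] ℝ} {u v w x : V}

/-- The action functional `J(u) = ½ B(u,u) − I(u)`, the form playing the role of `q_λ`. -/
noncomputable def actionFunctional (B : V →L[ℝ] V →L[ℝ] ℝ) (I : V → ℝ) (u : V) : ℝ :=
  B u u / 2 - I u

/-- The Nehari–Pankov set of `½ B − I` relative to `W`, the derivative of `I` being `I'`. -/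
def nehariPankovSet (W : Submodule ℝ V) (B : V →L[ℝ] V →L[ℝ] ℝ) (I' : V → V →L[ℝ] ℝ) : Set V :=
  {u | u ∉ W ∧ ∀ w ∈ W ⊔ Submodule.span ℝ {u}, B u w = I' u w}

/-- The infimum of the action over the Nehari–Pankov set; it corresponds to `c_λ`. -/
noncomputable def groundLevel (W : Submodule ℝ V) (I : V → ℝ) (I' : V → V →L[ℝ] ℝ)
    (B : V →L[ℝ] V →L[ℝ] ℝ) : ℝ :=
  sInf (actionFunctional B I '' nehariPankovSet W B I')

/-- The minimizers of the action over the Nehari–Pankov set; it corresponds to `Q_λ`. -/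
def groundStates (W : Submodule ℝ V) (I : V → ℝ) (I' : V → V →L[ℝ] ℝ)
    (B : V →L[ℝ] V →L[ℝ] ℝ) : Set V :=
  {u ∈ nehariPankovSet W B I' | actionFunctional B I u = groundLevel W I I' B}

theorem actionFunctional_eq_add (B B' : V →L[ℝ] V →L[ℝ] ℝ) (I : V → ℝ) (u : V) :
    actionFunctional B' I u = actionFunctional B I u + (B' - B) u u / 2 := by
  simp only [actionFunctional, _root_.sub_apply]
  ring

theorem tendsto_actionFunctional {ι : Type*} {f : Filter ι} {b : ι → V →L[ℝ] V →L[ℝ] ℝ} {x : ι → V}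
    (hI : Continuous I) (hb : Tendsto b f (𝓝 B)) (hx : Tendsto x f (𝓝 u)) :
    Tendsto (fun i => actionFunctional (b i) I (x i)) f (𝓝 (actionFunctional B I u)) :=
  ((tendsto_apply_self hb hx).div_const 2).sub ((hI.tendsto u).comp hx)

theorem continuous_actionFunctional (hI : Continuous I) (B : V →L[ℝ] V →L[ℝ] ℝ) :
    Continuous (actionFunctional B I) :=
  continuous_iff_continuousAt.2 fun _ => tendsto_actionFunctional hI tendsto_const_nhds tendsto_id

namespace AdmissibleNonlinearity

theorem actionFunctional_zero (hI : AdmissibleNonlinearity I I') (B : V →L[ℝ] V →L[ℝ] ℝ) :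
    actionFunctional B I 0 = 0 := by
  simp [actionFunctional, hI.map_zero]

theorem hasFDerivAt_actionFunctional (hI : AdmissibleNonlinearity I I')
    (hB : ∀ u v, B u v = B v u) (u : V) :
    HasFDerivAt (actionFunctional B I) (B u - I' u) u := by
  have hquad := ((B.hasFDerivAt (x := u)).clm_apply (hasFDerivAt_id u)).const_mul (1 / 2)
  have hfun : actionFunctional B I = fun x => 1 / 2 * B x (id x) - I x := by
    ext x
    rw [actionFunctional, id]
    ring
  rw [hfun]
  refine (hquad.sub (hI.hasFDerivAt u)).congr_fderiv ?_
  ext v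
  simp [hB v u]
  ring

theorem exists_mem_halfSpace_actionFunctional_pos [W.HasOrthogonalProjection]
    (hI : AdmissibleNonlinearity I I') (hB : IsSplitForm W B) (hu : u ∉ W) :
    ∃ x ∈ halfSpace W u, 0 < actionFunctional B I x := by
  obtain ⟨w, hw, hw1, hwu⟩ := exists_unit_orthogonal_mem_halfSpace hu
  obtain ⟨δ, hδ, hcoer⟩ := hB.coercive
  have hne : w ≠ 0 := norm_ne_zero_iff.1 (hw1.symm ▸ one_ne_zero)
  have hBw : 0 < B w w / 2 := by
    have := hcoer w hw
    rw [hw1, one_pow, mul_one] at this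
    linarith
  obtain ⟨t, hlt, ht⟩ :=
    (((hI.tendsto_div_sq_zero w hne).eventually_lt_const hBw).and self_mem_nhdsWithin).exists
  rw [div_lt_iff₀ (pow_pos ht 2)] at hlt
  refine ⟨t • w, smul_mem_halfSpace hwu (le_of_lt ht), ?_⟩
  simp only [actionFunctional, map_smul, _root_.smul_apply, smul_eq_mul]
  linarith

theorem actionFunctional_nonpos (hI : AdmissibleNonlinearity I I') (hB : IsSplitForm W B)
    (hv : v ∈ W) : actionFunctional B I v ≤ 0 := by
  have hBv := hB.nonpos hv
  have hIv := hI.nonneg v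
  rw [actionFunctional]
  linarith

theorem actionFunctional_le_of_weakTendsto [FiniteDimensional ℝ W]
    (hI : AdmissibleNonlinearity I I') (hB : IsSplitForm W B) {x : ℕ → V} {r : ℕ → ℝ} {s : ℝ}
    (hx : WeakTendsto x atTop u) (hr : Tendsto r atTop (𝓝 s))
    (hle : ∀ j, actionFunctional B I (x j) ≤ r j) : actionFunctional B I u ≤ s := by
  let y := fun j => x j - u
  have hy : WeakTendsto y atTop 0 := by
    simpa [y, sub_eq_neg_add] using hx.const_add (-u)
  have hP : Tendsto (fun j => W.starProjection (y j)) atTop (𝓝 0) := by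
    simpa using hy.starProjection W
  have hPP := tendsto_apply_self (tendsto_const_nhds (x := B)) hP
  have hlim : Tendsto (fun j => B u u / 2 + B u (y j) +
      B (W.starProjection (y j)) (W.starProjection (y j)) / 2 - I (x j)) atTop
      (𝓝 (actionFunctional B I u)) := by
    simpa [actionFunctional] using
      (((hy (B u)).const_add (B u u / 2)).add (hPP.div_const 2)).sub
        (hI.tendsto_of_weakTendsto x u hx)
  refine le_of_tendsto_of_tendsto' hlim hr fun j => le_trans ?_ (hle j)
  have hexpand : B (x j) (x j) = B u u + 2 * B u (y j) + B (y j) (y j) := by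
    simp only [y, map_sub, _root_.sub_apply, hB.symm (x j) u]
    ring
  have hPy := hB.starProjection_apply_self_le (y j)
  rw [actionFunctional, hexpand]
  linarith

theorem actionFunctional_add_smul_le (hI : AdmissibleNonlinearity I I')
    (hB : ∀ u v, B u v = B v u) (hu : u ∈ nehariPankovSet W B I') (hv : v ∈ W) {t : ℝ}
    (ht : 0 ≤ t) : actionFunctional B I (v + t • u) ≤ actionFunctional B I u + B v v / 2 := by
  have hmem : ((t - 1) * ((t - 1) / 2 + 1)) • u + t • v ∈ W ⊔ Submodule.span ℝ {u} :=
    Submodule.add_mem _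
      (Submodule.mem_sup_right (Submodule.smul_mem _ _ (Submodule.mem_span_singleton_self u)))
      (Submodule.mem_sup_left (W.smul_mem t hv))
  have hI4 := hI.sub_add_deriv_nonpos u (ne_of_mem_of_not_mem W.zero_mem hu.1).symm v (t - 1)
    (by linarith)
  rw [add_sub_cancel, ← hu.2 _ hmem, add_comm (t • u)] at hI4
  simp only [actionFunctional, map_add, map_smul, _root_.add_apply, _root_.smul_apply, smul_eq_mul,
    hB v u] at hI4 ⊢
  linarith

theorem actionFunctional_smul_lt (hI : AdmissibleNonlinearity I I')
    (hu : u ∈ nehariPankovSet W B I') {t : ℝ} (ht : 0 ≤ t) (ht1 : t ≠ 1) :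
    actionFunctional B I (t • u) < actionFunctional B I u := by
  have hmem : ((t - 1) * ((t - 1) / 2 + 1)) • u ∈ W ⊔ Submodule.span ℝ {u} :=
    Submodule.mem_sup_right (Submodule.smul_mem _ _ (Submodule.mem_span_singleton_self u))
  have hI4 := hI.sub_add_deriv_neg u (ne_of_mem_of_not_mem W.zero_mem hu.1).symm (t - 1)
    (by linarith) (sub_ne_zero.2 ht1)
  rw [add_sub_cancel, ← hu.2 _ hmem] at hI4
  simp only [actionFunctional, map_smul, _root_.smul_apply, smul_eq_mul] at hI4 ⊢
  linarith

theorem isMaxOn_halfSpace_of_mem_nehariPankovSet (hI : AdmissibleNonlinearity I I')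
    (hB : IsSplitForm W B) (hu : u ∈ nehariPankovSet W B I') :
    IsMaxOn (actionFunctional B I) (halfSpace W u) u := by
  rintro _ ⟨v, hv, t, ht, rfl⟩
  exact (hI.actionFunctional_add_smul_le hB.symm hu hv ht).trans (by linarith [hB.nonpos hv])

theorem eq_of_mem_halfSpace_of_actionFunctional_le (hI : AdmissibleNonlinearity I I')
    (hB : IsSplitForm W B) (hu : u ∈ nehariPankovSet W B I') (hx : x ∈ halfSpace W u)
    (hle : actionFunctional B I u ≤ actionFunctional B I x) : x = u := by
  obtain ⟨v, hv, t, ht, rfl⟩ := hx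
  have hupper := hI.actionFunctional_add_smul_le hB.symm hu hv ht
  have hv0 : v = 0 := by_contra fun hne => by linarith [hB.neg v hv hne]
  subst hv0
  rw [zero_add] at hle ⊢
  have ht1 : t = 1 := by_contra fun hne => (hI.actionFunctional_smul_lt hu ht hne).not_ge hle
  rw [ht1, one_smul]

theorem actionFunctional_nonneg_of_mem_nehariPankovSet (hI : AdmissibleNonlinearity I I')
    (hB : IsSplitForm W B) (hu : u ∈ nehariPankovSet W B I') : 0 ≤ actionFunctional B I u :=
  (hI.actionFunctional_zero B).ge.trans
    (hI.isMaxOn_halfSpace_of_mem_nehariPankovSet hB hu (mem_halfSpace_of_mem W.zero_mem))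

theorem groundLevel_le (hI : AdmissibleNonlinearity I I') (hB : IsSplitForm W B)
    (hu : u ∈ nehariPankovSet W B I') : groundLevel W I I' B ≤ actionFunctional B I u :=
  csInf_le ⟨0, forall_mem_image.2 fun _ hx =>
    hI.actionFunctional_nonneg_of_mem_nehariPankovSet hB hx⟩ (mem_image_of_mem _ hu)

theorem groundLevel_le_add (hI : AdmissibleNonlinearity I I') (hB : IsSplitForm W B)
    (hB' : IsSplitForm W B') (hu : u ∈ nehariPankovSet W B I')
    (hxu : x ∈ halfSpace W u) (hx : x ∈ nehariPankovSet W B' I') :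
    groundLevel W I I' B' ≤ actionFunctional B I u + (B' - B) x x / 2 := by
  have hmax : actionFunctional B I x ≤ actionFunctional B I u :=
    hI.isMaxOn_halfSpace_of_mem_nehariPankovSet hB hu hxu
  have hle := hI.groundLevel_le hB' hx
  rw [actionFunctional_eq_add B B'] at hle
  linarith

theorem mem_nehariPankovSet_of_isMaxOn (hI : AdmissibleNonlinearity I I')
    (hB : ∀ u v, B u v = B v u) (hxW : x ∉ W)
    (hmax : IsMaxOn (actionFunctional B I) (halfSpace W x) x) : x ∈ nehariPankovSet W B I' := by
  refine ⟨hxW, fun w hw => ?_⟩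
  obtain ⟨v, hv, _, hsx, rfl⟩ := Submodule.mem_sup.1 hw
  obtain ⟨s, rfl⟩ := Submodule.mem_span_singleton.1 hsx
  have hline : HasDerivAt (fun τ : ℝ => actionFunctional B I (x + τ • (v + s • x)))
      ((B x - I' x) (v + s • x)) 0 :=
    (hI.hasFDerivAt_actionFunctional hB x).hasLineDerivAt (v + s • x)
  have hnear : ∀ᶠ τ : ℝ in 𝓝 0, 0 ≤ 1 + τ * s :=
    (Continuous.tendsto' (by fun_prop) 0 1 (by simp)).eventually_const_le one_pos
  have hlocal : IsLocalMax (fun τ : ℝ => actionFunctional B I (x + τ • (v + s • x))) 0 := by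
    filter_upwards [hnear] with τ hτ
    have hmem := hmax (add_smul_mem_halfSpace (W.smul_mem τ hv) hτ)
    have hrw : τ • v + (1 + τ * s) • x = x + τ • (v + s • x) := by module
    simpa [hrw] using hmem
  exact sub_eq_zero.1 (hlocal.hasDerivAt_eq_zero hline)

end AdmissibleNonlinearity

end Action

section GroundStates

namespace AdmissibleNonlinearity

variable {V : Type*} [NormedAddCommGroup V] [InnerProductSpace ℝ V] [CompleteSpace V]
  {W : Submodule ℝ V} [FiniteDimensional ℝ W] {B B₀ : V →L[ℝ] V →L[ℝ] ℝ}
  {I : V → ℝ} {I' : V → V →L[ℝ] ℝ} {u : V} (hI : AdmissibleNonlinearity I I')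
include hI

theorem exists_frequently_norm_le_of_actionFunctional_nonneg {b : ℕ → V →L[ℝ] V →L[ℝ] ℝ}
    {x z : ℕ → V} {z₀ : V} {R : ℝ} (hb : Tendsto b atTop (𝓝 B))
    (hz : WeakTendsto z atTop z₀) (hz₀ : z₀ ∉ W) (hzR : ∀ j, ‖z j‖ ≤ R)
    (hxz : ∀ j, x j ∈ halfSpace W (z j)) (hx : ∀ j, 0 ≤ actionFunctional (b j) I (x j)) :
    ∃ R', ∃ᶠ j in atTop, ‖x j‖ ≤ R' := by
  have hnorm : Tendsto (fun j => ‖b j‖) atTop (𝓝 ‖B‖) := (continuous_norm.tendsto B).comp hb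
  obtain ⟨M, hM⟩ := hnorm.bddAbove_range
  by_contra! hunb
  have htop : Tendsto (fun j => ‖x j‖) atTop atTop :=
    tendsto_atTop.2 fun R' => (hunb R').mono fun _ => le_of_lt
  refine hI.not_tendsto_norm_atTop_of_le_mul_sq (M := M / 2) hz hz₀ hzR hxz (fun j => ?_) htop
  have hbx := (le_abs_self _).trans (abs_apply_self_le (b j) (x j))
  have hbM := mul_le_mul_of_nonneg_right (hM (mem_range_self j)) (sq_nonneg ‖x j‖)
  have hxj := hx j
  rw [actionFunctional] at hxj
  linarith

theorem isCompact_halfSpace_inter_actionFunctional_nonneg (hu : u ∉ W)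
    (B : V →L[ℝ] V →L[ℝ] ℝ) :
    IsCompact (halfSpace W u ∩ {x | 0 ≤ actionFunctional B I x}) := by
  have hbdd : ∃ R : ℝ, ∀ x ∈ halfSpace W u, 0 ≤ actionFunctional B I x → ‖x‖ ≤ R := by
    by_contra! hunb
    choose x hx hpos hnorm using fun j : ℕ => hunb j
    obtain ⟨R, hR⟩ := hI.exists_frequently_norm_le_of_actionFunctional_nonneg tendsto_const_nhds
      (WeakTendsto.const u atTop) hu (fun _ => le_rfl) hx hpos
    obtain ⟨j, hjR, hj⟩ :=
      (hR.and_eventually (tendsto_natCast_atTop_atTop.eventually_ge_atTop R)).exists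
    exact (hj.trans_lt (hnorm j)).not_ge hjR
  obtain ⟨R, hR⟩ := hbdd
  have hclosed : IsClosed {x | 0 ≤ actionFunctional B I x} :=
    isClosed_le continuous_const (continuous_actionFunctional hI.continuous B)
  convert (isCompact_halfSpace_inter_closedBall hu R).inter_right hclosed using 1
  ext x
  simp only [mem_inter_iff, mem_closedBall_zero_iff]
  exact ⟨fun h => ⟨⟨h.1, hR x h.1 h.2⟩, h.2⟩, fun h => ⟨h.1.1, h.2⟩⟩

theorem exists_isMaxOn_halfSpace (hB : IsSplitForm W B) (hu : u ∉ W) :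
    ∃ x ∈ halfSpace W u, x ∉ W ∧ IsMaxOn (actionFunctional B I) (halfSpace W u) x := by
  obtain ⟨y, hy, hypos⟩ := hI.exists_mem_halfSpace_actionFunctional_pos hB hu
  have hcompact := hI.isCompact_halfSpace_inter_actionFunctional_nonneg hu B
  obtain ⟨x, ⟨hx, -⟩, hmax⟩ := hcompact.exists_isMaxOn ⟨y, hy, hypos.le⟩
    (continuous_actionFunctional hI.continuous B).continuousOn
  have hxpos : 0 < actionFunctional B I x := hypos.trans_le (hmax ⟨hy, hypos.le⟩)
  refine ⟨x, hx, fun hxW => (hI.actionFunctional_nonpos hB hxW).not_gt hxpos, fun z hz => ?_⟩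
  rcases le_total 0 (actionFunctional B I z) with hzpos | hzneg
  · exact hmax ⟨hz, hzpos⟩
  · exact hzneg.trans hxpos.le

theorem exists_mem_nehariPankovSet (hB : IsSplitForm W B) (hu : u ∉ W) :
    ∃ x ∈ halfSpace W u, x ∈ nehariPankovSet W B I' := by
  obtain ⟨x, hx, hxW, hmax⟩ := hI.exists_isMaxOn_halfSpace hB hu
  exact ⟨x, hx, hI.mem_nehariPankovSet_of_isMaxOn hB.symm hxW
    (hmax.on_subset (halfSpace_subset_of_mem hx))⟩

theorem nehariPankovSet_nonempty (hB : IsSplitForm W B) (hW : W ≠ ⊤) :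
    (nehariPankovSet W B I').Nonempty := by
  obtain ⟨u, hu⟩ := SetLike.exists_not_mem_of_ne_top W hW rfl
  obtain ⟨x, -, hx⟩ := hI.exists_mem_nehariPankovSet hB hu
  exact ⟨x, hx⟩

theorem exists_subseq_weakTendsto_notMem {w : ℕ → V} {δ K : ℝ} (hδ : 0 < δ)
    (hw : ∀ j, w j ∈ Wᗮ) (hw1 : ∀ j, ‖w j‖ = 1)
    (hK : ∀ s ≥ 0, ∀ j, s ^ 2 * δ - I (s • w j) ≤ K) :
    ∃ z ∉ W, ∃ φ : ℕ → ℕ, StrictMono φ ∧ WeakTendsto (w ∘ φ) atTop z := by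
  obtain ⟨z, φ, hφ, hz⟩ := exists_subseq_weakTendsto_of_norm_le fun j => (hw1 j).le
  refine ⟨z, fun hzW => ?_, φ, hφ, hz⟩
  have hz0 : z = 0 := by
    have hP := hz.starProjection W
    simp only [Function.comp_apply, (W.starProjection_apply_eq_zero_iff).2 (hw _),
      W.starProjection_eq_self_iff.2 hzW] at hP
    exact tendsto_nhds_unique hP tendsto_const_nhds
  subst hz0
  obtain ⟨s, hsK, hs⟩ := (((tendsto_pow_atTop two_ne_zero).atTop_mul_const hδ
    |>.eventually_gt_atTop K).and (eventually_ge_atTop (0 : ℝ))).exists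
  have hlim : Tendsto (fun j => s ^ 2 * δ - I (s • w (φ j))) atTop (𝓝 (s ^ 2 * δ)) := by
    simpa [hI.map_zero] using
      (hI.tendsto_of_weakTendsto _ _ (hz.const_smul s)).const_sub (s ^ 2 * δ)
  exact hsK.not_ge (le_of_tendsto' hlim fun j => hK s hs (φ j))

theorem exists_subseq_weakTendsto_of_mem_nehariPankovSet {b : ℕ → V →L[ℝ] V →L[ℝ] ℝ} {u : ℕ → V}
    {δ K : ℝ} (hδ : 0 < δ) (hcoer : ∀ j, ∀ w ∈ Wᗮ, δ * ‖w‖ ^ 2 ≤ b j w w)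
    (hb : ∀ j, IsSplitForm W (b j)) (hu : ∀ j, u j ∈ nehariPankovSet W (b j) I')
    (hK : ∀ j, actionFunctional (b j) I (u j) ≤ K) :
    ∃ z ∉ W, ∃ φ : ℕ → ℕ, StrictMono φ ∧ ∃ w : ℕ → V, (∀ j, ‖w j‖ = 1) ∧
      (∀ j, w j ∉ W) ∧ (∀ j, w j ∈ halfSpace W (u (φ j))) ∧ WeakTendsto w atTop z := by
  choose w hw hw1 hwu using fun j => exists_unit_orthogonal_mem_halfSpace (hu j).1
  have hwK : ∀ s ≥ 0, ∀ j, s ^ 2 * (δ / 2) - I (s • w j) ≤ K := fun s hs j => by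
    have hmax := hI.isMaxOn_halfSpace_of_mem_nehariPankovSet (hb j) (hu j)
      (smul_mem_halfSpace (hwu j) hs)
    have hcoer_w := hcoer j (s • w j) (Wᗮ.smul_mem s (hw j))
    rw [norm_smul, hw1 j, mul_one, Real.norm_eq_abs, sq_abs] at hcoer_w
    have hle := hmax.trans (hK j)
    rw [actionFunctional] at hle
    linarith
  obtain ⟨z, hz, φ, hφ, hwz⟩ :=
    hI.exists_subseq_weakTendsto_notMem (half_pos hδ) hw hw1 hwK
  have hwW : ∀ j, w j ∉ W := fun j hjW => one_ne_zero ((hw1 j).symm.trans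
    (norm_eq_zero.2 (Submodule.disjoint_def.1 W.orthogonal_disjoint _ hjW (hw j))))
  exact ⟨z, hz, φ, hφ, w ∘ φ, fun _ => hw1 _, fun _ => hwW _, fun _ => hwu _, hwz⟩

theorem groundStates_nonempty (hB : IsSplitForm W B) (hW : W ≠ ⊤) :
    (groundStates W I I' B).Nonempty := by
  obtain ⟨δ, hδ, hcoer⟩ := hB.coercive
  have hbdd : BddBelow (actionFunctional B I '' nehariPankovSet W B I') :=
    ⟨0, forall_mem_image.2 fun _ hx => hI.actionFunctional_nonneg_of_mem_nehariPankovSet hB hx⟩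
  obtain ⟨r, hr_anti, hr, hr_mem⟩ :=
    exists_seq_tendsto_sInf ((hI.nehariPankovSet_nonempty hB hW).image _) hbdd
  choose u hu hur using hr_mem
  obtain ⟨z, hz, φ, hφ, w, -, -, hwu, hwz⟩ :=
    hI.exists_subseq_weakTendsto_of_mem_nehariPankovSet hδ (fun _ => hcoer) (fun _ => hB) hu
      (fun j => (hur j).trans_le (hr_anti (Nat.zero_le j)))
  obtain ⟨x, ⟨v, hv, t, ht, rfl⟩, hx⟩ := hI.exists_mem_nehariPankovSet hB hz
  refine ⟨_, hx, le_antisymm ?_ (hI.groundLevel_le hB hx)⟩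
  refine hI.actionFunctional_le_of_weakTendsto hB ((hwz.const_smul t).const_add v)
    (hr.comp hφ.tendsto_atTop) fun j => ?_
  rw [Function.comp_apply, ← hur]
  exact hI.isMaxOn_halfSpace_of_mem_nehariPankovSet hB (hu _)
    (halfSpace_subset_of_mem (hwu j) (add_smul_mem_halfSpace hv ht))

theorem exists_subseq_tendsto_of_mem_nehariPankovSet (hB₀ : IsSplitForm W B₀)
    (hu : u ∈ nehariPankovSet W B₀ I') {b : ℕ → V →L[ℝ] V →L[ℝ] ℝ} {x : ℕ → V}
    (hb : Tendsto b atTop (𝓝 B₀)) (hsplit : ∀ j, IsSplitForm W (b j))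
    (hxu : ∀ j, x j ∈ halfSpace W u) (hx : ∀ j, x j ∈ nehariPankovSet W (b j) I') :
    ∃ φ : ℕ → ℕ, StrictMono φ ∧ Tendsto (x ∘ φ) atTop (𝓝 u) := by
  have hge : ∀ j, actionFunctional (b j) I u ≤ actionFunctional (b j) I (x j) := fun j =>
    hI.isMaxOn_halfSpace_of_mem_nehariPankovSet (hsplit j) (hx j)
      (mem_halfSpace_symm (hxu j) (hx j).1)
  obtain ⟨R, hR⟩ := hI.exists_frequently_norm_le_of_actionFunctional_nonneg hb
    (WeakTendsto.const u atTop) hu.1 (fun _ => le_rfl) hxu fun j =>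
      hI.actionFunctional_nonneg_of_mem_nehariPankovSet (hsplit j) (hx j)
  obtain ⟨x₀, ⟨hx₀, -⟩, φ, hφ, hlim⟩ :=
    (isCompact_halfSpace_inter_closedBall hu.1 R).tendsto_subseq'
      (hR.mono fun j hj => ⟨hxu j, mem_closedBall_zero_iff.2 hj⟩)
  have hle : actionFunctional B₀ I u ≤ actionFunctional B₀ I x₀ :=
    le_of_tendsto_of_tendsto'
      (tendsto_actionFunctional hI.continuous (hb.comp hφ.tendsto_atTop) tendsto_const_nhds)
      (tendsto_actionFunctional hI.continuous (hb.comp hφ.tendsto_atTop) hlim) fun j => hge (φ j)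
  rw [hI.eq_of_mem_halfSpace_of_actionFunctional_le hB₀ hu hx₀ hle] at hlim
  exact ⟨φ, hφ, hlim⟩

theorem eventually_mem_nehariPankovSet_norm_sub_lt (hB₀ : IsSplitForm W B₀)
    (hu : u ∈ nehariPankovSet W B₀ I') {ε : ℝ} (hε : 0 < ε) :
    ∀ᶠ B in 𝓝[{B | IsSplitForm W B}] B₀,
      ∀ x ∈ halfSpace W u, x ∈ nehariPankovSet W B I' → ‖x - u‖ < ε := by
  by_contra hfreq
  obtain ⟨b, hb, hfar⟩ := exists_seq_forall_of_frequently
    ((not_eventually.1 hfreq).and_eventually self_mem_nhdsWithin)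
  push Not at hfar
  choose x hxu hx hxε using fun j => (hfar j).1
  obtain ⟨φ, -, hlim⟩ := hI.exists_subseq_tendsto_of_mem_nehariPankovSet hB₀ hu
    (tendsto_nhds_of_tendsto_nhdsWithin hb) (fun j => (hfar j).2) hxu hx
  obtain ⟨j, hj⟩ := ((tendsto_iff_norm_sub_tendsto_zero.1 hlim).eventually_lt_const hε).exists
  exact hj.not_ge (hxε (φ j))

theorem groundLevel_le_of_mem_groundStates (hB₀ : IsSplitForm W B₀)
    (hu : u ∈ groundStates W I I' B₀) {η : ℝ} (hη : 0 < η) :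
    ∀ᶠ B in 𝓝[{B | IsSplitForm W B}] B₀,
      groundLevel W I I' B ≤ groundLevel W I I' B₀ + (B - B₀) u u / 2 + η * ‖B - B₀‖ := by
  obtain ⟨ε, hε, hεη⟩ : ∃ ε > 0, (2 * ‖u‖ + ε) * ε < η := by
    have hlim : Tendsto (fun ε : ℝ => (2 * ‖u‖ + ε) * ε) (𝓝[>] 0) (𝓝 0) :=
      (Continuous.tendsto' (by fun_prop) 0 0 (by simp)).mono_left nhdsWithin_le_nhds
    obtain ⟨ε, hεη, hε⟩ := ((hlim.eventually_lt_const hη).and self_mem_nhdsWithin).exists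
    exact ⟨ε, hε, hεη⟩
  filter_upwards [hI.eventually_mem_nehariPankovSet_norm_sub_lt hB₀ hu.1 hε, self_mem_nhdsWithin]
    with B hnear hB
  obtain ⟨x, hxu, hx⟩ := hI.exists_mem_nehariPankovSet hB hu.1.1
  have hcmp := hI.groundLevel_le_add hB₀ hB hu.1 hxu hx
  have hxε := (hnear x hxu hx).le
  have hnorm : ‖x‖ ≤ ‖u‖ + ε := by linarith [norm_le_norm_add_norm_sub' x u]
  have hquad : (B - B₀) x x - (B - B₀) u u ≤ ‖B - B₀‖ * η :=
    calc (B - B₀) x x - (B - B₀) u u ≤ ‖B - B₀‖ * ((‖x‖ + ‖u‖) * ‖x - u‖) :=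
          (le_abs_self _).trans (abs_apply_self_sub_apply_self_le _ _ _)
      _ ≤ ‖B - B₀‖ * ((2 * ‖u‖ + ε) * ε) := by gcongr ?_ * (?_ * ?_); linarith
      _ ≤ ‖B - B₀‖ * η := by gcongr
  have hηB : 0 ≤ η * ‖B - B₀‖ := by positivity
  rw [hu.2] at hcmp
  linarith

theorem eventually_groundLevel_le_add (hB₀ : IsSplitForm W B₀) (hW : W ≠ ⊤) {η : ℝ} (hη : 0 < η) :
    ∀ᶠ B in 𝓝[{B | IsSplitForm W B}] B₀, groundLevel W I I' B ≤ groundLevel W I I' B₀ + η := by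
  obtain ⟨u, hu⟩ := hI.groundStates_nonempty hB₀ hW
  have hlim : Tendsto (fun B => ‖B - B₀‖ * (‖u‖ ^ 2 / 2 + 1)) (𝓝[{B | IsSplitForm W B}] B₀)
      (𝓝 0) :=
    (zero_mul (‖u‖ ^ 2 / 2 + 1)) ▸
      ((tendsto_norm_sub_self B₀).mono_left nhdsWithin_le_nhds).mul_const _
  filter_upwards [hI.groundLevel_le_of_mem_groundStates hB₀ hu one_pos,
    hlim.eventually_lt_const hη] with B hB hBη
  have hquad := (le_abs_self _).trans (abs_apply_self_le (B - B₀) u)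
  linarith

theorem exists_frequently_groundLevel_slope_le {b : ℕ → V →L[ℝ] V →L[ℝ] ℝ} {δ K : ℝ}
    (hB₀ : IsSplitForm W B₀) (hW : W ≠ ⊤) (hδ : 0 < δ) (hb : ∀ j, IsSplitForm W (b j))
    (hcoer : ∀ j, ∀ w ∈ Wᗮ, δ * ‖w‖ ^ 2 ≤ b j w w) (hK : ∀ j, groundLevel W I I' (b j) ≤ K) :
    ∃ C, ∃ᶠ j in atTop,
      (groundLevel W I I' B₀ - groundLevel W I I' (b j)) / ‖b j - B₀‖ ≤ C := by
  choose u hu using fun j => hI.groundStates_nonempty (hb j) hW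
  obtain ⟨z, hz, φ, hφ, w, hw1, hwW, hwu, hwz⟩ :=
    hI.exists_subseq_weakTendsto_of_mem_nehariPankovSet hδ hcoer hb (fun j => (hu j).1)
      fun j => (hu j).2.trans_le (hK j)
  choose x hxw hx using fun j => hI.exists_mem_nehariPankovSet hB₀ (hwW j)
  obtain ⟨R, hR⟩ := hI.exists_frequently_norm_le_of_actionFunctional_nonneg
    (tendsto_const_nhds (x := B₀)) hwz hz (fun j => (hw1 j).le) hxw fun j =>
      hI.actionFunctional_nonneg_of_mem_nehariPankovSet hB₀ (hx j)
  refine ⟨R ^ 2 / 2, hφ.tendsto_atTop.frequently (hR.mono fun j hj =>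
    div_le_of_le_mul₀ (norm_nonneg (b (φ j) - B₀)) (by positivity) ?_)⟩
  have hcmp := hI.groundLevel_le_add (hb _) hB₀ (hu (φ j)).1
    (halfSpace_subset_of_mem (hwu j) (hxw j)) (hx j)
  rw [(hu _).2] at hcmp
  calc groundLevel W I I' B₀ - groundLevel W I I' (b (φ j))
      ≤ (B₀ - b (φ j)) (x j) (x j) / 2 := by linarith
    _ ≤ ‖B₀ - b (φ j)‖ * ‖x j‖ ^ 2 / 2 := by
        gcongr; exact (le_abs_self _).trans (abs_apply_self_le _ _)
    _ ≤ ‖B₀ - b (φ j)‖ * R ^ 2 / 2 := by gcongr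
    _ = R ^ 2 / 2 * ‖b (φ j) - B₀‖ := by
        rw [norm_sub_rev B₀ (b (φ j))]; ring

theorem exists_eventually_groundLevel_sub_le (hB₀ : IsSplitForm W B₀) (hW : W ≠ ⊤) :
    ∃ K, ∀ᶠ B in 𝓝[{B | IsSplitForm W B}] B₀,
      groundLevel W I I' B₀ - groundLevel W I I' B ≤ K * ‖B - B₀‖ := by
  obtain ⟨δ, hδ, hcoer⟩ := hB₀.eventually_coercive
  have hbdd : (𝓝[{B | IsSplitForm W B}] B₀).IsBoundedUnder (· ≤ ·)
      fun B => (groundLevel W I I' B₀ - groundLevel W I I' B) / ‖B - B₀‖ := by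
    refine isBoundedUnder_le_of_seq_frequently_le fun b hb => ?_
    obtain ⟨N, hN⟩ := eventually_atTop.1 <| hb.eventually <|
      (hI.eventually_groundLevel_le_add hB₀ hW one_pos).and <|
        (eventually_nhdsWithin_of_eventually_nhds hcoer).and self_mem_nhdsWithin
    obtain ⟨K, hK⟩ := hI.exists_frequently_groundLevel_slope_le (b := fun j => b (j + N)) hB₀ hW hδ
      (fun j => (hN _ (Nat.le_add_left N j)).2.2) (fun j => (hN _ (Nat.le_add_left N j)).2.1)
      fun j => (hN _ (Nat.le_add_left N j)).1
    exact ⟨K, (tendsto_add_atTop_nat N).frequently hK⟩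
  obtain ⟨K, hK⟩ := hbdd
  refine ⟨K, (eventually_map.1 hK).mono fun B hB => ?_⟩
  rcases (norm_nonneg (B - B₀)).eq_or_lt' with hzero | hpos
  · rw [hzero, (norm_sub_eq_zero_iff (a := B) (b := B₀)).1 hzero, sub_self, mul_zero]
  · exact (div_le_iff₀ hpos).1 hB

theorem continuousOn_groundLevel (hW : W ≠ ⊤) :
    ContinuousOn (groundLevel W I I') {B | IsSplitForm W B} := by
  intro B₀ hB₀
  obtain ⟨K, hK⟩ := hI.exists_eventually_groundLevel_sub_le hB₀ hW
  have hlim : Tendsto (fun B => groundLevel W I I' B₀ - K * ‖B - B₀‖)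
      (𝓝[{B | IsSplitForm W B}] B₀) (𝓝 (groundLevel W I I' B₀)) := by
    have hraw := ((tendsto_norm_sub_self B₀).const_mul K).const_sub (groundLevel W I I' B₀)
    rw [mul_zero, sub_zero] at hraw
    exact hraw.mono_left nhdsWithin_le_nhds
  refine tendsto_order.2 ⟨fun a ha => ?_, fun a ha => ?_⟩
  · filter_upwards [hlim.eventually_const_lt ha, hK] with B haB hKB
    linarith
  · filter_upwards [hI.eventually_groundLevel_le_add hB₀ hW (half_pos (sub_pos.2 ha))] with B hB
    linarith

end AdmissibleNonlinearity

end GroundStates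

section Pencil

namespace AdmissibleNonlinearity

variable {V : Type*} [NormedAddCommGroup V] [InnerProductSpace ℝ V] [CompleteSpace V]
  {W : Submodule ℝ V} [FiniteDimensional ℝ W] {A H : V →L[ℝ] V →L[ℝ] ℝ}
  {I : V → ℝ} {I' : V → V →L[ℝ] ℝ} {l : ℝ} {u : V} (hI : AdmissibleNonlinearity I I')
include hI

theorem continuousOn_groundLevel_sub_smul {G : Set ℝ} (hG : ∀ l ∈ G, IsSplitForm W (A - l • H))
    (hW : W ≠ ⊤) : ContinuousOn (fun l : ℝ => groundLevel W I I' (A - l • H)) G :=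
  (hI.continuousOn_groundLevel hW).comp (continuous_sub_smul A H).continuousOn hG

theorem eventually_groundLevel_sub_smul_le (hl : ∀ᶠ m in 𝓝 l, IsSplitForm W (A - m • H))
    (hu : u ∈ groundStates W I I' (A - l • H)) {η : ℝ} (hη : 0 < η) :
    ∀ᶠ m in 𝓝 l, groundLevel W I I' (A - m • H) ≤
      groundLevel W I I' (A - l • H) - (m - l) * (H u u / 2) + η * |m - l| := by
  have hη' : 0 < η / (‖H‖ + 1) := by positivity
  filter_upwards [(IsSplitForm.tendsto_sub_smul_nhdsWithin hl).eventually
    (hI.groundLevel_le_of_mem_groundStates hl.self_of_nhds hu hη')] with m hm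
  have hnorm : η / (‖H‖ + 1) * (|m - l| * ‖H‖) ≤ η * |m - l| := by
    rw [div_mul_eq_mul_div, div_le_iff₀ (by positivity)]
    nlinarith [mul_nonneg hη.le (abs_nonneg (m - l))]
  rw [norm_sub_smul_sub_sub_smul A H m l] at hm
  simp only [_root_.sub_apply, _root_.smul_apply, smul_eq_mul] at hm
  linarith

theorem exists_eventually_groundLevel_sub_smul_sub_le
    (hl : ∀ᶠ m in 𝓝 l, IsSplitForm W (A - m • H)) (hW : W ≠ ⊤) :
    ∃ K, ∀ᶠ m in 𝓝 l,
      groundLevel W I I' (A - l • H) - groundLevel W I I' (A - m • H) ≤ K * |m - l| := by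
  obtain ⟨K, hK⟩ := hI.exists_eventually_groundLevel_sub_le hl.self_of_nhds hW
  refine ⟨K * ‖H‖, ((IsSplitForm.tendsto_sub_smul_nhdsWithin hl).eventually hK).mono fun m hm => ?_⟩
  rw [norm_sub_smul_sub_sub_smul A H m l] at hm
  linarith

theorem limsup_groundLevel_slope_le (hl : ∀ᶠ m in 𝓝 l, IsSplitForm W (A - m • H)) (hW : W ≠ ⊤)
    (hu : u ∈ groundStates W I I' (A - l • H)) :
    limsup (fun ε : ℝ => (groundLevel W I I' (A - (l - ε) • H) -
      groundLevel W I I' (A - l • H)) / ε) (𝓝[>] 0) ≤ H u u / 2 := by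
  obtain ⟨K, hK⟩ := hI.exists_eventually_groundLevel_sub_smul_sub_le hl hW
  exact limsup_backward_slope_le (c := fun m => groundLevel W I I' (A - m • H))
    (fun η hη => hI.eventually_groundLevel_sub_smul_le hl hu hη) hK

theorem le_liminf_groundLevel_slope (hl : ∀ᶠ m in 𝓝 l, IsSplitForm W (A - m • H)) (hW : W ≠ ⊤)
    (hu : u ∈ groundStates W I I' (A - l • H)) :
    H u u / 2 ≤ liminf (fun ε : ℝ => (groundLevel W I I' (A - l • H) -
      groundLevel W I I' (A - (l + ε) • H)) / ε) (𝓝[>] 0) := by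
  obtain ⟨K, hK⟩ := hI.exists_eventually_groundLevel_sub_smul_sub_le hl hW
  exact le_liminf_forward_slope (c := fun m => groundLevel W I I' (A - m • H))
    (fun η hη => hI.eventually_groundLevel_sub_smul_le hl hu hη) hK

end AdmissibleNonlinearity

end Pencil

section Eigenbasis

variable {V : Type*} [NormedAddCommGroup V] [InnerProductSpace ℝ V]

theorem coefH_add (lam : ℕ → ℝ) (ζ : ℕ → V) (u v : V) (k : ℕ) :
    coefH lam ζ (u + v) k = coefH lam ζ u k + coefH lam ζ v k := by
  rw [coefH, inner_add_left, add_div, coefH, coefH]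

theorem coefH_smul (lam : ℕ → ℝ) (ζ : ℕ → V) (c : ℝ) (u : V) (k : ℕ) :
    coefH lam ζ (c • u) k = c * coefH lam ζ u k := by
  rw [coefH, real_inner_smul_left, mul_div_assoc, coefH]

theorem mem_Esub_of_le (ζ : ℕ → V) {n k : ℕ} (hk : k ≤ n) : ζ k ∈ Esub ζ n :=
  Submodule.subset_span ⟨k, hk, rfl⟩

theorem coefH_eq_zero_of_mem_orthogonal (lam : ℕ → ℝ) {ζ : ℕ → V} {n k : ℕ} {w : V}
    (hw : w ∈ (Esub ζ n)ᗮ) (hk : k ≤ n) : coefH lam ζ w k = 0 := by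
  rw [coefH, Submodule.inner_left_of_mem_orthogonal (mem_Esub_of_le ζ hk) hw, zero_div]

instance finiteDimensional_Esub (ζ : ℕ → V) (n : ℕ) : FiniteDimensional ℝ (Esub ζ n) :=
  FiniteDimensional.span_of_finite ℝ ((finite_le_nat n).image ζ)

/-- The vectors `ζ k` form an orthonormal basis of `H` consisting of eigenvectors of a nonnegative
operator with eigenvalues `lam k`, expressed through the inner product of the form domain `V`. -/
structure IsEigenbasis (lam : ℕ → ℝ) (ζ : ℕ → V) : Prop where
  nonneg : ∀ k, 0 ≤ lam k
  inner_eq : ∀ j k, ⟪ζ j, ζ k⟫_ℝ = if j = k then 1 + lam k else 0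
  dense : (Submodule.span ℝ (range ζ)).topologicalClosure = ⊤

namespace IsEigenbasis

variable {lam : ℕ → ℝ} {ζ : ℕ → V} {n : ℕ} {l : ℝ} (hζ : IsEigenbasis lam ζ)
include hζ

theorem one_add_pos (k : ℕ) : 0 < 1 + lam k := by
  linarith [hζ.nonneg k]

theorem coefH_eq_zero_of_mem {k : ℕ} {v : V} (hv : v ∈ Esub ζ n) (hk : n < k) :
    coefH lam ζ v k = 0 := by
  have hle : Esub ζ n ≤ (ℝ ∙ ζ k)ᗮ := by
    refine Submodule.span_le.2 (forall_mem_image.2 fun j (hj : j ≤ n) => ?_)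
    rw [SetLike.mem_coe, Submodule.mem_orthogonal_singleton_iff_inner_left, hζ.inner_eq,
      if_neg (hj.trans_lt hk).ne]
  rw [coefH, Submodule.mem_orthogonal_singleton_iff_inner_left.1 (hle hv), zero_div]

theorem Esub_ne_top (n : ℕ) : Esub ζ n ≠ ⊤ := fun htop => by
  have hzero : coefH lam ζ (ζ (n + 1)) (n + 1) = 0 :=
    hζ.coefH_eq_zero_of_mem (htop ▸ Submodule.mem_top) n.lt_succ_self
  rw [coefH, hζ.inner_eq, if_pos rfl, div_self (hζ.one_add_pos _).ne'] at hzero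
  exact one_ne_zero hzero

theorem exists_hilbertBasis [CompleteSpace V] :
    ∃ b : HilbertBasis ℕ ℝ V, ∀ k, b k = (√(1 + lam k))⁻¹ • ζ k := by
  have hsqrt : ∀ k, √(1 + lam k) ≠ 0 := fun k => (Real.sqrt_pos.2 (hζ.one_add_pos k)).ne'
  have hortho : Orthonormal ℝ fun k => (√(1 + lam k))⁻¹ • ζ k := by
    refine orthonormal_iff_ite.2 fun j k => ?_
    rw [real_inner_smul_left, real_inner_smul_right, hζ.inner_eq]
    split_ifs with hjk
    · rw [hjk, ← mul_assoc, ← mul_inv, Real.mul_self_sqrt (hζ.one_add_pos k).le,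
        inv_mul_cancel₀ (hζ.one_add_pos k).ne']
    · simp
  have hspan : ⊤ ≤ (Submodule.span ℝ
      (range fun k => (√(1 + lam k))⁻¹ • ζ k)).topologicalClosure := by
    rw [← hζ.dense]
    refine Submodule.topologicalClosure_mono (Submodule.span_le.2 (forall_mem_range.2 fun k => ?_))
    rw [SetLike.mem_coe, ← smul_inv_smul₀ (hsqrt k) (ζ k)]
    exact Submodule.smul_mem _ _ (Submodule.subset_span (mem_range_self k))
  exact ⟨HilbertBasis.mk hortho hspan, fun k => by rw [HilbertBasis.coe_mk]⟩

theorem hasSum_inner [CompleteSpace V] (u v : V) :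
    HasSum (fun k => (1 + lam k) * (coefH lam ζ u k * coefH lam ζ v k)) ⟪u, v⟫_ℝ := by
  obtain ⟨b, hb⟩ := hζ.exists_hilbertBasis
  refine (b.hasSum_inner_mul_inner u v).congr_fun fun k => ?_
  have hpos := hζ.one_add_pos k
  have hsq : (√(1 + lam k))⁻¹ * (√(1 + lam k))⁻¹ = (1 + lam k)⁻¹ := by
    rw [← mul_inv, Real.mul_self_sqrt hpos.le]
  rw [hb, real_inner_smul_right, real_inner_smul_left, coefH, coefH, real_inner_comm v (ζ k),
    mul_mul_mul_comm, hsq]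
  field_simp

theorem summable_coefH_mul [CompleteSpace V] (u v : V) :
    Summable fun k => coefH lam ζ u k * coefH lam ζ v k := by
  refine Summable.of_norm_bounded (hζ.hasSum_inner u v).summable.norm fun k => ?_
  rw [norm_mul (1 + lam k), Real.norm_of_nonneg (hζ.one_add_pos k).le]
  exact le_mul_of_one_le_left (norm_nonneg _) (le_add_of_nonneg_right (hζ.nonneg k))

/-- The inner product of `H` restricted to the form domain `V`, as an algebraic bilinear form; its
continuity is proved by Cauchy–Schwarz, see `innerH`. -/
noncomputable def innerHForm [CompleteSpace V] : LinearMap.BilinForm ℝ V :=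
  LinearMap.mk₂ ℝ (fun u v => ∑' k, coefH lam ζ u k * coefH lam ζ v k)
    (fun u u' v => by
      simp only [coefH_add, add_mul]
      exact (hζ.summable_coefH_mul u v).tsum_add (hζ.summable_coefH_mul u' v))
    (fun c u v => by simp only [coefH_smul, mul_assoc, tsum_mul_left, smul_eq_mul])
    (fun u v v' => by
      simp only [coefH_add, mul_add]
      exact (hζ.summable_coefH_mul u v).tsum_add (hζ.summable_coefH_mul u v'))
    (fun c u v => by simp only [coefH_smul, mul_left_comm, tsum_mul_left, smul_eq_mul])

theorem hasSum_innerHForm [CompleteSpace V] (u v : V) :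
    HasSum (fun k => coefH lam ζ u k * coefH lam ζ v k) (hζ.innerHForm u v) :=
  (hζ.summable_coefH_mul u v).hasSum

theorem innerHForm_comm [CompleteSpace V] (u v : V) : hζ.innerHForm u v = hζ.innerHForm v u :=
  tsum_congr fun _ => mul_comm _ _

theorem innerHForm_self_nonneg [CompleteSpace V] (u : V) : 0 ≤ hζ.innerHForm u u :=
  (hζ.hasSum_innerHForm u u).nonneg fun _ => mul_self_nonneg _

theorem innerHForm_self_le [CompleteSpace V] (u : V) : hζ.innerHForm u u ≤ ‖u‖ ^ 2 := by
  rw [← real_inner_self_eq_norm_sq]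
  refine hasSum_le (fun k => ?_) (hζ.hasSum_innerHForm u u) (hζ.hasSum_inner u u)
  exact le_mul_of_one_le_left (mul_self_nonneg _) (le_add_of_nonneg_right (hζ.nonneg k))

theorem norm_innerHForm_le [CompleteSpace V] (u v : V) :
    ‖hζ.innerHForm u v‖ ≤ 1 * ‖u‖ * ‖v‖ := by
  rw [one_mul, Real.norm_eq_abs]
  refine abs_le_of_sq_le_sq ?_ (by positivity)
  calc hζ.innerHForm u v ^ 2
      = hζ.innerHForm u v * hζ.innerHForm v u := by rw [hζ.innerHForm_comm v u, sq]
    _ ≤ hζ.innerHForm u u * hζ.innerHForm v v :=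
      LinearMap.BilinForm.apply_mul_apply_le_of_forall_zero_le _ hζ.innerHForm_self_nonneg u v
    _ ≤ ‖u‖ ^ 2 * ‖v‖ ^ 2 :=
      mul_le_mul (hζ.innerHForm_self_le u) (hζ.innerHForm_self_le v)
        (hζ.innerHForm_self_nonneg v) (sq_nonneg _)
    _ = (‖u‖ * ‖v‖) ^ 2 := (mul_pow _ _ _).symm

/-- The inner product of `H` restricted to the form domain `V`, as a bounded bilinear form. -/
noncomputable def innerH [CompleteSpace V] : V →L[ℝ] V →L[ℝ] ℝ :=
  hζ.innerHForm.mkContinuous₂ 1 hζ.norm_innerHForm_le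

/-- The closed form `(u, v) ↦ ∑ₖ λ_k ⟨u,ζ_k⟩_H ⟨v,ζ_k⟩_H` of the operator, obtained by removing the
inner product of `H` from that of the form domain. -/
noncomputable def energyForm [CompleteSpace V] : V →L[ℝ] V →L[ℝ] ℝ :=
  let innerV : V →L[ℝ] V →L[ℝ] ℝ := innerSL ℝ
  innerV - hζ.innerH

theorem hasSum_innerH [CompleteSpace V] (u v : V) :
    HasSum (fun k => coefH lam ζ u k * coefH lam ζ v k) (hζ.innerH u v) :=
  hζ.hasSum_innerHForm u v

theorem normHsq_eq [CompleteSpace V] (u : V) : normHsq lam ζ u = hζ.innerH u u :=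
  tsum_congr fun _ => sq _

theorem hasSum_energyForm_sub_smul [CompleteSpace V] (l : ℝ) (u v : V) :
    HasSum (fun k => (lam k - l) * (coefH lam ζ u k * coefH lam ζ v k))
      ((hζ.energyForm - l • hζ.innerH) u v) := by
  have hdiff := ((hζ.hasSum_inner u v).sub (hζ.hasSum_innerH u v)).sub
    ((hζ.hasSum_innerH u v).mul_left l)
  refine hdiff.congr_fun fun k => ?_
  ring

theorem energyForm_sub_smul_neg [CompleteSpace V] (hmono : Monotone lam) (hl : lam n < l) {v : V}
    (hv : v ∈ Esub ζ n) (hne : v ≠ 0) : (hζ.energyForm - l • hζ.innerH) v v < 0 := by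
  have hterm : ∀ k ≤ n, lam k - l < 0 := fun k hk => by linarith [hmono hk]
  obtain ⟨k, hk⟩ : ∃ k, coefH lam ζ v k ≠ 0 := by
    by_contra! hzero
    have hsum := hζ.hasSum_inner v v
    simp only [hzero, mul_zero] at hsum
    exact hne (inner_self_eq_zero.1 (hsum.unique hasSum_zero))
  have hkn : k ≤ n := not_lt.1 fun hnk => hk (hζ.coefH_eq_zero_of_mem hv hnk)
  refine hasSum_lt (fun j => ?_) (mul_neg_of_neg_of_pos (hterm k hkn) (mul_self_pos.2 hk))
    (hζ.hasSum_energyForm_sub_smul l v v) hasSum_zero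
  rcases le_or_gt j n with hj | hj
  · exact mul_nonpos_of_nonpos_of_nonneg (hterm j hj).le (mul_self_nonneg _)
  · rw [hζ.coefH_eq_zero_of_mem hv hj, mul_zero, mul_zero]

theorem mul_norm_sq_le_energyForm_sub_smul [CompleteSpace V] (hmono : Monotone lam)
    (hl : -1 ≤ l) {w : V} (hw : w ∈ (Esub ζ n)ᗮ) :
    (lam (n + 1) - l) / (1 + lam (n + 1)) * ‖w‖ ^ 2 ≤ (hζ.energyForm - l • hζ.innerH) w w := by
  rw [← real_inner_self_eq_norm_sq]
  refine hasSum_le (fun k => ?_) ((hζ.hasSum_inner w w).mul_left _)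
    (hζ.hasSum_energyForm_sub_smul l w w)
  rcases le_or_gt k n with hk | hk
  · rw [coefH_eq_zero_of_mem_orthogonal lam hw hk]
    simp
  · rw [← mul_assoc]
    refine mul_le_mul_of_nonneg_right ?_ (mul_self_nonneg _)
    have hlam : lam (n + 1) ≤ lam k := hmono hk
    have hpos := hζ.one_add_pos (n + 1)
    rw [div_mul_eq_mul_div, div_le_iff₀ hpos]
    nlinarith

theorem isSplitForm [CompleteSpace V] (hmono : Monotone lam)
    (hl : l ∈ Ioo (lam n) (lam (n + 1))) :
    IsSplitForm (Esub ζ n) (hζ.energyForm - l • hζ.innerH) where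
  symm u v := by
    refine (hζ.hasSum_energyForm_sub_smul l u v).unique ?_
    simpa only [mul_comm (coefH lam ζ u _)] using hζ.hasSum_energyForm_sub_smul l v u
  orthogonal v hv w hw := by
    refine (hζ.hasSum_energyForm_sub_smul l v w).unique (hasSum_zero.congr_fun fun k => ?_)
    rcases le_or_gt k n with hk | hk
    · rw [coefH_eq_zero_of_mem_orthogonal lam hw hk, mul_zero, mul_zero]
    · rw [hζ.coefH_eq_zero_of_mem hv hk, zero_mul, mul_zero]
  neg v hv hne := hζ.energyForm_sub_smul_neg hmono hl.1 hv hne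
  coercive := ⟨_, div_pos (sub_pos.2 hl.2) (hζ.one_add_pos _), fun _ hw =>
    hζ.mul_norm_sq_le_energyForm_sub_smul hmono (by linarith [hζ.nonneg n, hl.1]) hw⟩

theorem qForm_eq [CompleteSpace V] (l : ℝ) (u v : V) :
    qForm lam ζ l u v = (hζ.energyForm - l • hζ.innerH) u v :=
  (hζ.hasSum_energyForm_sub_smul l u v).tsum_eq

theorem Jfun_eq [CompleteSpace V] (I : V → ℝ) (l : ℝ) :
    Jfun lam ζ I l = actionFunctional (hζ.energyForm - l • hζ.innerH) I :=
  funext fun u => by rw [Jfun, hζ.qForm_eq, actionFunctional]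

theorem NehariPankov_eq [CompleteSpace V] (I' : V → V →L[ℝ] ℝ) (n : ℕ) (l : ℝ) :
    NehariPankov lam ζ I' n l =
      nehariPankovSet (Esub ζ n) (hζ.energyForm - l • hζ.innerH) I' := by
  simp only [NehariPankov, nehariPankovSet, Fsub, Jderiv, hζ.qForm_eq, sub_eq_zero]

theorem clevel_eq [CompleteSpace V] (I : V → ℝ) (I' : V → V →L[ℝ] ℝ) (n : ℕ) (l : ℝ) :
    clevel lam ζ I I' n l =
      groundLevel (Esub ζ n) I I' (hζ.energyForm - l • hζ.innerH) := by
  rw [clevel, hζ.Jfun_eq, hζ.NehariPankov_eq, groundLevel]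

theorem Qset_eq [CompleteSpace V] (I : V → ℝ) (I' : V → V →L[ℝ] ℝ) (n : ℕ) (l : ℝ) :
    Qset lam ζ I I' n l =
      groundStates (Esub ζ n) I I' (hζ.energyForm - l • hζ.innerH) := by
  rw [Qset, hζ.Jfun_eq, hζ.NehariPankov_eq, hζ.clevel_eq, groundStates]

end IsEigenbasis

end Eigenbasis

theorem clevel_continuity_and_derivative_bounds_general {E : Type*} [NormedAddCommGroup E]
    [InnerProductSpace ℝ E] [CompleteSpace E]
    (lam : ℕ → ℝ) (ζ : ℕ → E)
    (hlam_mono : Monotone lam) (hlam_nonneg : ∀ k, 0 ≤ lam k)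
    (hON : ∀ j k, ⟪ζ j, ζ k⟫_ℝ = if j = k then 1 + lam k else 0)
    (hdense : (Submodule.span ℝ (Set.range ζ)).topologicalClosure = ⊤)
    (I : E → ℝ) (I' : E → E →L[ℝ] ℝ)
    (hIderiv : ∀ u, HasFDerivAt I (I' u) u)
    (hI1 : ∀ (u : ℕ → E) (a : E),
      (∀ φ : E →L[ℝ] ℝ, Tendsto (fun j => φ (u j)) atTop (𝓝 (φ a))) →
      Tendsto (fun j => I (u j)) atTop (𝓝 (I a)))
    (hI0 : I 0 = 0)
    (hI3mono : ∀ u : E, u ≠ 0 → MonotoneOn (fun t : ℝ => I (t • u) / t ^ 2) (Ioi 0))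
    (hI3zero : ∀ u : E, u ≠ 0 → Tendsto (fun t : ℝ => I (t • u) / t ^ 2) (𝓝[>] 0) (𝓝 0))
    (hI3top : ∀ u : E, u ≠ 0 → Tendsto (fun t : ℝ => I (t • u) / t ^ 2) atTop atTop)
    (hI4 : ∀ u : E, u ≠ 0 → ∀ v : E, ∀ s : ℝ, -1 ≤ s →
      I u - I ((1 + s) • u + v) + I' u ((s * (s / 2 + 1)) • u + (1 + s) • v) ≤ 0)
    (hI4strict : ∀ u : E, u ≠ 0 → ∀ s : ℝ, -1 ≤ s → s ≠ 0 →
      I u - I ((1 + s) • u) + I' u ((s * (s / 2 + 1)) • u) < 0)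
    (n : ℕ) :
    ContinuousOn (fun lambda => clevel lam ζ I I' n lambda)
      (Ioo (lam n) (lam (n + 1))) ∧
    ∀ lambda ∈ Ioo (lam n) (lam (n + 1)),
      Filter.limsup
          (fun ε : ℝ => (clevel lam ζ I I' n (lambda - ε) - clevel lam ζ I I' n lambda) / ε)
          (𝓝[>] 0) ≤
        sInf {m : ℝ | ∃ u ∈ Qset lam ζ I I' n lambda, m = normHsq lam ζ u / 2} ∧
      sSup {m : ℝ | ∃ u ∈ Qset lam ζ I I' n lambda, m = normHsq lam ζ u / 2} ≤
        Filter.liminf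
          (fun ε : ℝ => (clevel lam ζ I I' n lambda - clevel lam ζ I I' n (lambda + ε)) / ε)
          (𝓝[>] 0) := by
  have hζ : IsEigenbasis lam ζ := ⟨hlam_nonneg, hON, hdense⟩
  have hI : AdmissibleNonlinearity I I' :=
    ⟨hIderiv, hI1, hI0, hI3mono, hI3zero, hI3top, hI4, hI4strict⟩
  have hW := hζ.Esub_ne_top n
  simp only [hζ.clevel_eq, hζ.Qset_eq, hζ.normHsq_eq]
  refine ⟨hI.continuousOn_groundLevel_sub_smul (fun _ => hζ.isSplitForm hlam_mono) hW,
    fun l hl => ?_⟩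
  have hsplit := (isOpen_Ioo.eventually_mem hl).mono fun _ => hζ.isSplitForm hlam_mono
  obtain ⟨u, hu⟩ := hI.groundStates_nonempty (hζ.isSplitForm hlam_mono hl) hW
  constructor
  · refine le_csInf ⟨_, u, hu, rfl⟩ ?_
    rintro _ ⟨v, hv, rfl⟩
    exact hI.limsup_groundLevel_slope_le hsplit hW hv
  · refine csSup_le ⟨_, u, hu, rfl⟩ ?_
    rintro _ ⟨v, hv, rfl⟩
    exact hI.le_liminf_groundLevel_slope hsplit hW hv

/-- Continuity of `λ ↦ c_λ` on the spectral gap, together with the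
one-sided derivative bounds
`limsup_{ε→0⁺} (c_{λ−ε} − c_λ)/ε ≤ inf {‖u‖_H²/2 : u ∈ Q_λ}` and
`sup {‖u‖_H²/2 : u ∈ Q_λ} ≤ liminf_{ε→0⁺} (c_λ − c_{λ+ε})/ε`. -/
theorem clevel_continuity_and_derivative_bounds {E : Type*} [NormedAddCommGroup E]
    [InnerProductSpace ℝ E] [CompleteSpace E]
    (lam : ℕ → ℝ) (ζ : ℕ → E)
    (hlam_mono : Monotone lam) (hlam_nonneg : ∀ k, 0 ≤ lam k)
    (hlam_top : Tendsto lam atTop atTop)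
    (hON : ∀ j k, ⟪ζ j, ζ k⟫_ℝ = if j = k then 1 + lam k else 0)
    (hdense : (Submodule.span ℝ (Set.range ζ)).topologicalClosure = ⊤)
    (I : E → ℝ) (I' : E → E →L[ℝ] ℝ)
    (hIderiv : ∀ u, HasFDerivAt I (I' u) u) (hIderiv_cont : Continuous I')
    (hI1 : ∀ (u : ℕ → E) (a : E),
      (∀ φ : E →L[ℝ] ℝ, Tendsto (fun j => φ (u j)) atTop (𝓝 (φ a))) →
      Tendsto (fun j => I (u j)) atTop (𝓝 (I a)))
    (hI2 : I 0 = 0 ∧ ∀ u : E, u ≠ 0 → 0 < I u)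
    (hI3mono : ∀ u : E, u ≠ 0 → MonotoneOn (fun t : ℝ => I (t • u) / t ^ 2) (Ioi 0))
    (hI3zero : ∀ u : E, u ≠ 0 → Tendsto (fun t : ℝ => I (t • u) / t ^ 2) (𝓝[>] 0) (𝓝 0))
    (hI3top : ∀ u : E, u ≠ 0 → Tendsto (fun t : ℝ => I (t • u) / t ^ 2) atTop atTop)
    (hI4 : ∀ u : E, u ≠ 0 → ∀ v : E, ∀ s : ℝ, -1 ≤ s →
      I u - I ((1 + s) • u + v) + I' u ((s * (s / 2 + 1)) • u + (1 + s) • v) ≤ 0)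
    (hI4strict : ∀ u : E, u ≠ 0 → ∀ s : ℝ, -1 ≤ s → s ≠ 0 →
      I u - I ((1 + s) • u) + I' u ((s * (s / 2 + 1)) • u) < 0)
    (n : ℕ)
    (hgap : lam n < lam (n + 1)) :
    ContinuousOn (fun lambda => clevel lam ζ I I' n lambda)
      (Ioo (lam n) (lam (n + 1))) ∧
    ∀ lambda ∈ Ioo (lam n) (lam (n + 1)),
      Filter.limsup
          (fun ε : ℝ => (clevel lam ζ I I' n (lambda - ε) - clevel lam ζ I I' n lambda) / ε)
          (𝓝[>] 0) ≤
        sInf {m : ℝ | ∃ u ∈ Qset lam ζ I I' n lambda, m = normHsq lam ζ u / 2} ∧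
      sSup {m : ℝ | ∃ u ∈ Qset lam ζ I I' n lambda, m = normHsq lam ζ u / 2} ≤
        Filter.liminf
          (fun ε : ℝ => (clevel lam ζ I I' n lambda - clevel lam ζ I I' n (lambda + ε)) / ε)
          (𝓝[>] 0) :=
  clevel_continuity_and_derivative_bounds_general lam ζ hlam_mono hlam_nonneg hON hdense I I'
    hIderiv hI1 hI2.1 hI3mono hI3zero hI3top hI4 hI4strict n
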